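/- arXiv:1312.2568 — 2 statements merged into one kernel-verified Lean document; each statement's English description precedes it below -/
import Mathlib

section
/- For every integer d ≥ 3, every nonnegative function u in D^{1,2}(ℝ^d), and q = (d+2)/(d−2), one has S_d · ‖u^q‖_{2d/(d+2)}^2 − ∫_{ℝ^d} u^q (−Δ)^{−1}(u^q) dx ≤ S_d · ‖u‖_{2^*}^{8/(d−2)} · [ S_d ‖∇u‖_2^2 − ‖u‖_{2^*}^2 ], where 2^* = 2d/(d−2). -/
open MeasureTheory Real

noncomputable section

/-- Surface area of the unit sphere `𝕊^{d-1} ⊆ ℝ^d`. -/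
def sphereArea (d : ℕ) : ℝ := 2 * Real.pi ^ ((d : ℝ) / 2) / Real.Gamma ((d : ℝ) / 2)

/-- Green function of `-Δ` on `ℝ^d`, `d ≥ 3`: `G_d(x) = |x|^{2-d} / ((d-2)|𝕊^{d-1}|)`. -/
def greenKernel (d : ℕ) (x : EuclideanSpace ℝ (Fin d)) : ℝ :=
  ‖x‖ ^ ((2 : ℝ) - d) / (((d : ℝ) - 2) * sphereArea d)

/-- `(−Δ)⁻¹ v`, the convolution of `v` with the Green function of `-Δ` on `ℝ^d`. -/
def invLap (d : ℕ) (v : EuclideanSpace ℝ (Fin d) → ℝ) (x : EuclideanSpace ℝ (Fin d)) : ℝ :=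
  ∫ y, greenKernel d (x - y) * v y

/-- The Aubin–Talenti (optimal Sobolev) constant
`S_d = (1/(π d (d−2))) (Γ(d)/Γ(d/2))^{2/d}`. -/
def sobolevConst (d : ℕ) : ℝ :=
  1 / (Real.pi * d * ((d : ℝ) - 2)) *
    (Real.Gamma (d : ℝ) / Real.Gamma ((d : ℝ) / 2)) ^ ((2 : ℝ) / (d : ℝ))

/-- Membership in `D^{1,2}(ℝ^d)`: a (weakly) differentiable function with
`∇u ∈ L²` and `u ∈ L^{2*}`, `2* = 2d/(d-2)`. -/
def MemD12 (d : ℕ) (u : EuclideanSpace ℝ (Fin d) → ℝ) : Prop :=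
  Differentiable ℝ u ∧
  Integrable (fun x => ‖gradient u x‖ ^ 2) ∧
  Integrable (fun x => |u x| ^ (2 * (d : ℝ) / ((d : ℝ) - 2)))

/-- The `L^p` norm of `u`, written with real exponents: `(∫ |u|^p)^{1/p}`. -/
def lpNorm' {d : ℕ} (p : ℝ) (u : EuclideanSpace ℝ (Fin d) → ℝ) : ℝ :=
  (∫ x, |u x| ^ p) ^ (1 / p)

/-- The Laplacian `Δu = ∑ ∂²u/∂x_i²`. -/
def lap (d : ℕ) (u : EuclideanSpace ℝ (Fin d) → ℝ) (x : EuclideanSpace ℝ (Fin d)) : ℝ :=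
  ∑ i : Fin d, iteratedFDeriv ℝ 2 u x ![EuclideanSpace.single i 1, EuclideanSpace.single i 1]

abbrev Eu (d : ℕ) : Type := EuclideanSpace ℝ (Fin d)

lemma eu_nontrivial {d : ℕ} (hd : 3 ≤ d) : Nontrivial (Eu d) := by
  have : Nonempty (Fin d) := ⟨⟨0, by omega⟩⟩
  infer_instance

lemma polar_lint {d : ℕ} (f : Eu d → ENNReal) (hf : Measurable f) (hd : 3 ≤ d) :
    ∫⁻ z, f z = ∫⁻ w : Metric.sphere (0 : Eu d) 1, ∫⁻ r in Set.Ioi (0:ℝ),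
      ENNReal.ofReal (r ^ (d-1)) * f (r • (w : Eu d)) ∂volume
        ∂((volume : Measure (Eu d)).toSphere) := by
  have := eu_nontrivial hd
  have hm := (volume : Measure (Eu d)).measurePreserving_homeomorphUnitSphereProd
  have hfr : Module.finrank ℝ (Eu d) = d := by simp
  rw [hfr] at hm
  have h1 : ∫⁻ z, f z = ∫⁻ x : ({(0)}ᶜ : Set (Eu d)), f x.1 ∂((volume : Measure (Eu d)).comap (↑)) := by
    rw [lintegral_subtype_comap (measurableSet_singleton _).compl f,
        restrict_compl_singleton]
  rw [h1]
  have h2 := hm.lintegral_comp_emb (Homeomorph.measurableEmbedding _)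
    (fun p : Metric.sphere (0 : Eu d) 1 × Set.Ioi (0:ℝ) => f (p.2.1 • p.1.1))
  have h3 : ∀ x : ({(0)}ᶜ : Set (Eu d)), f x.1 = (fun p : Metric.sphere (0 : Eu d) 1 × Set.Ioi (0:ℝ) => f (p.2.1 • p.1.1)) (homeomorphUnitSphereProd (Eu d) x) := by
    intro x
    have hx : ‖x.1‖ ≠ 0 := norm_ne_zero_iff.2 x.2
    simp [smul_smul, hx]
  rw [lintegral_congr h3, h2, lintegral_prod]
  · refine lintegral_congr fun w => ?_
    rw [Measure.volumeIoiPow, lintegral_withDensity_eq_lintegral_mul]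
    · rw [← lintegral_subtype_comap measurableSet_Ioi]; rfl
    · fun_prop
    · fun_prop
  · have hg : Measurable (fun p : Metric.sphere (0 : Eu d) 1 × Set.Ioi (0:ℝ) => (p.2.1 • p.1.1 : Eu d)) := by
      fun_prop
    have hh := hf.comp hg
    exact hh.aemeasurable

lemma polar_int {d : ℕ} (f : Eu d → ℝ) (hf : Integrable f) (hd : 3 ≤ d) :
    (∀ᵐ w : Metric.sphere (0 : Eu d) 1 ∂((volume : Measure (Eu d)).toSphere), 
      IntegrableOn (fun r : ℝ => r ^ (d-1) * f (r • (w : Eu d))) (Set.Ioi 0)) ∧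
    ∫ z, f z = ∫ w : Metric.sphere (0 : Eu d) 1, ∫ r in Set.Ioi (0:ℝ),
      r ^ (d-1) * f (r • (w : Eu d)) ∂volume
        ∂((volume : Measure (Eu d)).toSphere) := by
  have := eu_nontrivial hd
  have hm := (volume : Measure (Eu d)).measurePreserving_homeomorphUnitSphereProd
  have hfr : Module.finrank ℝ (Eu d) = d := by simp
  rw [hfr] at hm
  have h1 : ∫ z, f z = ∫ x : ({(0)}ᶜ : Set (Eu d)), f x.1 ∂((volume : Measure (Eu d)).comap (↑)) := by
    rw [integral_subtype_comap (measurableSet_singleton _).compl f,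
        restrict_compl_singleton]
  have h1' : Integrable (fun x : ({(0)}ᶜ : Set (Eu d)) => f x.1) ((volume : Measure (Eu d)).comap (↑)) := by
    have := hf.integrableOn (s := {(0:Eu d)}ᶜ)
    rwa [integrableOn_iff_comap_subtypeVal (measurableSet_singleton _).compl] at this
  have h3 : (fun x : ({(0)}ᶜ : Set (Eu d)) => f x.1) = (fun p : Metric.sphere (0 : Eu d) 1 × Set.Ioi (0:ℝ) => f (p.2.1 • p.1.1)) ∘ (homeomorphUnitSphereProd (Eu d)) := by
    funext x
    have hx : ‖x.1‖ ≠ 0 := norm_ne_zero_iff.2 x.2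
    simp [smul_smul, hx]
  have h2 := hm.integral_comp (Homeomorph.measurableEmbedding _)
    (fun p : Metric.sphere (0 : Eu d) 1 × Set.Ioi (0:ℝ) => f (p.2.1 • p.1.1))
  rw [h3, hm.integrable_comp_emb (Homeomorph.measurableEmbedding _)] at h1'
  have key : ∀ g : ℝ → ℝ, ∀ r : Set.Ioi (0:ℝ), (ENNReal.ofReal ((r:ℝ)^(d-1))).toReal • g r = (fun r : ℝ => r^(d-1) * g r) r := by
    intro g r
    have : 0 ≤ (r:ℝ)^(d-1) := pow_nonneg r.2.out.le _
    simp [ENNReal.toReal_ofReal this]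
  constructor
  · filter_upwards [h1'.prod_right_ae] with w hw
    rw [Measure.volumeIoiPow, integrable_withDensity_iff_integrable_smul' (by fun_prop) (by simp)] at hw
    simp only [key (fun r => f (r • w.1))] at hw
    rw [integrableOn_iff_comap_subtypeVal measurableSet_Ioi]
    exact hw
  · rw [h1]
    have h3' : ∀ x : ({(0)}ᶜ : Set (Eu d)), f x.1 = (fun p : Metric.sphere (0 : Eu d) 1 × Set.Ioi (0:ℝ) => f (p.2.1 • p.1.1)) (homeomorphUnitSphereProd (Eu d) x) := fun x => congrFun h3 x
    rw [integral_congr_ae (Filter.Eventually.of_forall h3'), h2, integral_prod _ h1']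
    refine integral_congr_ae (Filter.Eventually.of_forall fun w => ?_)
    simp only
    rw [Measure.volumeIoiPow, integral_withDensity_eq_integral_toReal_smul (by fun_prop) (by simp)]
    simp only [key (fun r => f (r • w.1))]
    rw [integral_subtype_comap measurableSet_Ioi (fun r : ℝ => r^(d-1) * f (r • w.1))]

lemma sphere_total {d : ℕ} (hd : 3 ≤ d) :
    ((volume : Measure (Eu d)).toSphere).real Set.univ = sphereArea d := by
  have := eu_nontrivial hd
  have : Nonempty (Fin d) := ⟨⟨0, by omega⟩⟩
  rw [Measure.toSphere_real_apply_univ, measureReal_def, EuclideanSpace.volume_ball]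
  have h0 : (0:ℝ) < d := by positivity
  have hG : Real.Gamma ((d:ℝ)/2 + 1) = (d:ℝ)/2 * Real.Gamma ((d:ℝ)/2) := Real.Gamma_add_one (by positivity)
  have hGp : 0 < Real.Gamma ((d:ℝ)/2) := Real.Gamma_pos_of_pos (by positivity)
  have hpi : √π ^ d = π ^ ((d:ℝ)/2) := by
    rw [Real.sqrt_eq_rpow, ← Real.rpow_mul_natCast Real.pi_pos.le]; congr 1; ring
  simp only [finrank_euclideanSpace, Fintype.card_fin, ENNReal.ofReal_one, one_pow, one_mul, hG, hpi]
  rw [ENNReal.toReal_ofReal (by positivity), sphereArea]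
  field_simp

lemma sphereArea_pos {d : ℕ} (hd : 3 ≤ d) : 0 < sphereArea d := by
  have : (0:ℝ) < d := by positivity
  have hGp : 0 < Real.Gamma ((d:ℝ)/2) := Real.Gamma_pos_of_pos (by positivity)
  unfold sphereArea
  have := Real.pi_pos
  positivity

lemma lint_near {d : ℕ} (hd : 3 ≤ d) (s : ℝ) (hs : -(d:ℝ) < s) :
    ∃ C : ENNReal, C ≠ ⊤ ∧ ∀ R : ℝ, 0 < R → 
      ∫⁻ z : Eu d in Metric.ball 0 R, ENNReal.ofReal (‖z‖ ^ s) = ENNReal.ofReal (R ^ (s + d)) * C := by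
  refine ⟨ENNReal.ofReal (1/(s+d)) * (volume : Measure (Eu d)).toSphere Set.univ, ?_, ?_⟩
  · exact ENNReal.mul_ne_top (by simp) (measure_ne_top _ _)
  intro R hR
  rw [← lintegral_indicator measurableSet_ball, polar_lint _ _ hd]
  · have : ∀ w : Metric.sphere (0 : Eu d) 1, ∫⁻ r in Set.Ioi (0:ℝ),
      ENNReal.ofReal (r ^ (d-1)) * (Metric.ball 0 R).indicator (fun z : Eu d => ENNReal.ofReal (‖z‖ ^ s)) (r • (w : Eu d)) = ENNReal.ofReal (R ^ (s + d) * (1/(s+d))) := by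
      intro w
      have e1 : ∀ r ∈ Set.Ioi (0:ℝ), ENNReal.ofReal (r ^ (d-1)) * (Metric.ball 0 R).indicator (fun z : Eu d => ENNReal.ofReal (‖z‖ ^ s)) (r • (w : Eu d)) = (Set.Iio R).indicator (fun r => ENNReal.ofReal (r ^ (s + d - 1))) r := by
        intro r hr
        have hr' : (0:ℝ) < r := hr
        have hn : ‖r • (w : Eu d)‖ = r := by simp [norm_smul, abs_of_pos hr']
        by_cases h : r < R
        · rw [Set.indicator_of_mem (by simpa [hn] using h), Set.indicator_of_mem (by simpa using h), hn,
            ← ENNReal.ofReal_mul (by positivity), ← Real.rpow_natCast, ← Real.rpow_add hr']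
          congr 2
          rw [Nat.cast_sub (by omega)]; push_cast; ring
        · rw [Set.indicator_of_notMem (by simpa [hn] using h), Set.indicator_of_notMem (by simpa using h), mul_zero]
      rw [setLIntegral_congr_fun measurableSet_Ioi e1, setLIntegral_indicator measurableSet_Iio, Set.inter_comm, Set.Ioi_inter_Iio,
        Measure.restrict_congr_set Ioo_ae_eq_Ioc, ← ofReal_integral_eq_lintegral_ofReal, ← intervalIntegral.integral_of_le hR.le, integral_rpow (Or.inl (by linarith))]
      · congr 1
        rw [Real.zero_rpow (by linarith)]
        ring_nf
      · exact (intervalIntegral.intervalIntegrable_rpow' (by linarith)).1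
      · filter_upwards [ae_restrict_mem measurableSet_Ioc] with y hy
        exact Real.rpow_nonneg hy.1.le _
    rw [lintegral_congr this, lintegral_const, ENNReal.ofReal_mul (by positivity), mul_assoc]
  · exact Measurable.indicator (by fun_prop) measurableSet_ball

lemma lint_far {d : ℕ} (hd : 3 ≤ d) (s : ℝ) (hs : s < -(d:ℝ)) :
    ∃ C : ENNReal, C ≠ ⊤ ∧ ∀ R : ℝ, 0 < R → 
      ∫⁻ z : Eu d in (Metric.ball 0 R)ᶜ, ENNReal.ofReal (‖z‖ ^ s) = ENNReal.ofReal (R ^ (s + d)) * C := by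
  refine ⟨ENNReal.ofReal (-1/(s+d)) * (volume : Measure (Eu d)).toSphere Set.univ, ?_, ?_⟩
  · exact ENNReal.mul_ne_top (by simp) (measure_ne_top _ _)
  intro R hR
  rw [← lintegral_indicator measurableSet_ball.compl, polar_lint _ _ hd]
  · have : ∀ w : Metric.sphere (0 : Eu d) 1, ∫⁻ r in Set.Ioi (0:ℝ),
      ENNReal.ofReal (r ^ (d-1)) * ((Metric.ball 0 R)ᶜ).indicator (fun z : Eu d => ENNReal.ofReal (‖z‖ ^ s)) (r • (w : Eu d)) = ENNReal.ofReal (R ^ (s + d) * (-1/(s+d))) := by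
      intro w
      have e1 : ∀ r ∈ Set.Ioi (0:ℝ), ENNReal.ofReal (r ^ (d-1)) * ((Metric.ball 0 R)ᶜ).indicator (fun z : Eu d => ENNReal.ofReal (‖z‖ ^ s)) (r • (w : Eu d)) = (Set.Ici R).indicator (fun r => ENNReal.ofReal (r ^ (s + d - 1))) r := by
        intro r hr
        have hr' : (0:ℝ) < r := hr
        have hn : ‖r • (w : Eu d)‖ = r := by simp [norm_smul, abs_of_pos hr']
        by_cases h : R ≤ r
        · rw [Set.indicator_of_mem (by simpa [hn] using h), Set.indicator_of_mem (by simpa using h), hn,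
            ← ENNReal.ofReal_mul (by positivity), ← Real.rpow_natCast, ← Real.rpow_add hr']
          congr 2
          rw [Nat.cast_sub (by omega)]; push_cast; ring
        · rw [Set.indicator_of_notMem (by simpa [hn] using h), Set.indicator_of_notMem (by simpa using h), mul_zero]
      rw [setLIntegral_congr_fun measurableSet_Ioi e1, setLIntegral_indicator measurableSet_Ici,
        Set.inter_eq_left.2 (show Set.Ici R ⊆ Set.Ioi 0 from fun x hx => lt_of_lt_of_le hR hx),
        Measure.restrict_congr_set Ioi_ae_eq_Ici.symm, ← ofReal_integral_eq_lintegral_ofReal, integral_Ioi_rpow_of_lt (by linarith) hR]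
      · congr 1
        ring_nf
      · exact integrableOn_Ioi_rpow_of_lt (by linarith) hR
      · filter_upwards [ae_restrict_mem measurableSet_Ioi] with y hy
        exact Real.rpow_nonneg (hR.trans hy).le _
    rw [lintegral_congr this, lintegral_const, ENNReal.ofReal_mul (by positivity), mul_assoc]
  · exact Measurable.indicator (by fun_prop) measurableSet_ball.compl

lemma kernel_comp {d : ℕ} (hd : 3 ≤ d) : ∃ C : ENNReal, C ≠ ⊤ ∧ ∀ x x' : Eu d, x ≠ x' →
    ∫⁻ y, ENNReal.ofReal (‖x - y‖ ^ (1 - (d:ℝ))) * ENNReal.ofReal (‖x' - y‖ ^ (1 - (d:ℝ))) ≤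
      C * ENNReal.ofReal (‖x - x'‖ ^ (2 - (d:ℝ))) := by
  have hd' : (3:ℝ) ≤ d := by exact_mod_cast hd
  obtain ⟨C1, hC1, h1⟩ := lint_near hd (1 - (d:ℝ)) (by linarith)
  obtain ⟨C2, hC2, h2⟩ := lint_far hd (2 - 2 * (d:ℝ)) (by linarith)
  refine ⟨ENNReal.ofReal ((1/2) ^ (2 - (d:ℝ))) * (C1 + C1 + C2 + C2), ?_, ?_⟩
  · exact ENNReal.mul_ne_top (by simp) (by simp [hC1, hC2])
  intro x x' hx
  have hpos : 0 < ‖x - x'‖ := norm_pos_iff.2 (sub_ne_zero.2 hx)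
  set R : ℝ := ‖x - x'‖ / 2 with hR
  have hRpos : 0 < R := by positivity
  let k : Eu d → ENNReal := fun z => (Metric.ball (0:Eu d) R).indicator (fun z => ENNReal.ofReal (‖z‖ ^ (1 - (d:ℝ)))) z
  let m : Eu d → ENNReal := fun z => ((Metric.ball (0:Eu d) R)ᶜ).indicator (fun z => ENNReal.ofReal (‖z‖ ^ (2 - 2 * (d:ℝ)))) z
  have hk : Measurable k := Measurable.indicator (by fun_prop) measurableSet_ball
  have hm : Measurable m := Measurable.indicator (by fun_prop) measurableSet_ball.compl
  have hkx : ∀ a : Eu d, ∫⁻ y, k (a - y) = ENNReal.ofReal (R ^ (1 - (d:ℝ) + d)) * C1 := by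
    intro a
    rw [lintegral_sub_left_eq_self k a, ← h1 R hRpos, ← lintegral_indicator measurableSet_ball]
  have hmx : ∀ a : Eu d, ∫⁻ y, m (a - y) = ENNReal.ofReal (R ^ (2 - 2 * (d:ℝ) + d)) * C2 := by
    intro a
    rw [lintegral_sub_left_eq_self m a, ← h2 R hRpos, ← lintegral_indicator measurableSet_ball.compl]
  have hmono : ∀ a b : ℝ, 0 < a → a ≤ b → b ^ (1 - (d:ℝ)) ≤ a ^ (1 - (d:ℝ)) := by
    intro a b ha hab
    exact Real.rpow_le_rpow_of_nonpos ha hab (by linarith)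
  have key : ∀ y, ENNReal.ofReal (‖x - y‖ ^ (1 - (d:ℝ))) * ENNReal.ofReal (‖x' - y‖ ^ (1 - (d:ℝ))) ≤
      (ENNReal.ofReal (R ^ (1 - (d:ℝ))) * k (x - y) + ENNReal.ofReal (R ^ (1 - (d:ℝ))) * k (x' - y))
        + (m (x - y) + m (x' - y)) := by
    intro y
    have htri : ‖x - x'‖ ≤ ‖x - y‖ + ‖x' - y‖ := by
      calc ‖x - x'‖ = ‖(x - y) - (x' - y)‖ := by congr 1; abel
        _ ≤ _ := norm_sub_le _ _
    by_cases hA : ‖x - y‖ < R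
    · have hB : R ≤ ‖x' - y‖ := by linarith
      have e : k (x - y) = ENNReal.ofReal (‖x - y‖ ^ (1 - (d:ℝ))) := Set.indicator_of_mem (by simpa using hA) _
      refine le_trans ?_ (le_trans (le_add_right le_rfl) (le_add_right le_rfl))
      rw [e, mul_comm]
      exact mul_le_mul_left (ENNReal.ofReal_le_ofReal (hmono _ _ hRpos hB)) _
    · by_cases hB : ‖x' - y‖ < R
      · push Not at hA
        have e : k (x' - y) = ENNReal.ofReal (‖x' - y‖ ^ (1 - (d:ℝ))) := Set.indicator_of_mem (by simpa using hB) _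
        refine le_trans ?_ (le_trans (le_add_left le_rfl) (le_add_right le_rfl))
        rw [e]
        exact mul_le_mul_left (ENNReal.ofReal_le_ofReal (hmono _ _ hRpos hA)) _
      · push Not at hA hB
        have e1 : m (x - y) = ENNReal.ofReal (‖x - y‖ ^ (2 - 2 * (d:ℝ))) := Set.indicator_of_mem (by simpa using hA) _
        have e2 : m (x' - y) = ENNReal.ofReal (‖x' - y‖ ^ (2 - 2 * (d:ℝ))) := Set.indicator_of_mem (by simpa using hB) _
        refine le_trans ?_ (le_add_left le_rfl)
        rw [e1, e2, ← ENNReal.ofReal_mul (by positivity), ← ENNReal.ofReal_add (by positivity) (by positivity)]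
        apply ENNReal.ofReal_le_ofReal
        have sq : ∀ a : ℝ, 0 < a → a ^ (2 - 2 * (d:ℝ)) = (a ^ (1 - (d:ℝ))) ^ 2 := by
          intro a ha
          rw [← Real.rpow_mul_natCast ha.le]; congr 1; push_cast; ring
        rw [sq _ (by linarith), sq _ (by linarith)]
        nlinarith [sq_nonneg (‖x - y‖ ^ (1 - (d:ℝ)) - ‖x' - y‖ ^ (1 - (d:ℝ))), sq_nonneg (‖x - y‖ ^ (1 - (d:ℝ))), sq_nonneg (‖x' - y‖ ^ (1 - (d:ℝ)))]
  have hk' : ∀ a : Eu d, Measurable fun y => k (a - y) := fun a => hk.comp (by fun_prop)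
  have hm' : ∀ a : Eu d, Measurable fun y => m (a - y) := fun a => hm.comp (by fun_prop)
  refine (lintegral_mono key).trans (le_of_eq ?_)
  have hs : Measurable fun y => ENNReal.ofReal (R ^ (1 - (d:ℝ))) * k (x - y) + ENNReal.ofReal (R ^ (1 - (d:ℝ))) * k (x' - y) :=
    ((hk' x).const_mul _).add ((hk' x').const_mul _)
  rw [lintegral_add_left hs, lintegral_add_left ((hk' x).const_mul _),
    lintegral_add_left (hm' x), lintegral_const_mul _ (hk' x), lintegral_const_mul _ (hk' x'), hkx, hkx, hmx, hmx]
  have e3 : ENNReal.ofReal (R ^ (1 - (d:ℝ))) * (ENNReal.ofReal (R ^ (1 - (d:ℝ) + d)) * C1) = ENNReal.ofReal (R ^ (2 - (d:ℝ))) * C1 := by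
    rw [← mul_assoc, ← ENNReal.ofReal_mul (by positivity), ← Real.rpow_add hRpos]
    congr 3; ring
  have e4 : R ^ (2 - 2 * (d:ℝ) + d) = R ^ (2 - (d:ℝ)) := by congr 1; ring
  have e5 : ENNReal.ofReal (R ^ (2 - (d:ℝ))) = ENNReal.ofReal ((1/2) ^ (2 - (d:ℝ))) * ENNReal.ofReal (‖x - x'‖ ^ (2 - (d:ℝ))) := by
    rw [← ENNReal.ofReal_mul (by positivity), ← Real.mul_rpow (by positivity) (by positivity), hR]
    congr 2; ring
  rw [e3, e4, e5]; ring

lemma hls_finite {d : ℕ} (hd : 3 ≤ d) (u : Eu d → ℝ) (hu0 : ∀ x, 0 ≤ u x) (hum : Measurable u)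
    (hN : ∫⁻ x, ENNReal.ofReal (u x ^ (2 * (d:ℝ) / ((d:ℝ) - 2))) ≠ ⊤) :
    ∫⁻ x, ∫⁻ y, ENNReal.ofReal (u x ^ (((d:ℝ) + 2) / ((d:ℝ) - 2))) *
      (ENNReal.ofReal (‖x - y‖ ^ (2 - (d:ℝ))) * ENNReal.ofReal (u y ^ (((d:ℝ) + 2) / ((d:ℝ) - 2)))) ≠ ⊤ := by
  have hd' : (3:ℝ) ≤ d := by exact_mod_cast hd
  have hd2 : (0:ℝ) < (d:ℝ) - 2 := by linarith
  have hd0 : (0:ℝ) < (d:ℝ) := by linarith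
  obtain ⟨C1, hC1, h1⟩ := lint_near hd (2 - (d:ℝ)) (by linarith)
  obtain ⟨C2, hC2, h2⟩ := lint_far hd (-2 * (d:ℝ)) (by linarith)
  set q : ℝ := ((d:ℝ) + 2) / ((d:ℝ) - 2) with hq
  have hqpos : 0 < q := by positivity
  set p : ℝ := 2 * (d:ℝ) / ((d:ℝ) - 2) with hp
  have hppos : 0 < p := by positivity
  set p' : ℝ := 2 * (d:ℝ) / ((d:ℝ) + 2) with hp'
  have hpp : p.HolderConjugate p' := by
    rw [Real.holderConjugate_iff]
    constructor
    · rw [hp, lt_div_iff₀ hd2]; linarith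
    · rw [hp, hp']; field_simp; ring
  set N := ∫⁻ x, ENNReal.ofReal (u x ^ p) with hNdef
  let v : Eu d → ENNReal := fun x => ENNReal.ofReal (u x ^ q)
  have hv : Measurable v := by fun_prop
  let F : Eu d → Eu d → ENNReal := fun x y => v x * (ENNReal.ofReal (‖x - y‖ ^ (2 - (d:ℝ))) * v y)
  let T : Eu d → Eu d → ENNReal := fun x y => {z : Eu d × Eu d | u z.2 ≤ u z.1}.indicator (fun z => F z.1 z.2) (x, y)
  have hset : MeasurableSet {z : Eu d × Eu d | u z.2 ≤ u z.1} :=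
    measurableSet_le (hum.comp measurable_snd) (hum.comp measurable_fst)
  have hT : Measurable (Function.uncurry T) := by
    change Measurable (fun z : Eu d × Eu d => T z.1 z.2)
    refine Measurable.indicator ?_ hset
    fun_prop
  have hFs : ∀ x y, F x y = F y x := by
    intro x y; simp only [F, norm_sub_rev x y]; ring
  have hFT : ∀ x y, F x y ≤ T x y + T y x := by
    intro x y
    rcases le_total (u y) (u x) with h | h
    · refine le_add_right (le_of_eq ?_)
      symm
      exact Set.indicator_of_mem (s := {z : Eu d × Eu d | u z.2 ≤ u z.1}) (by simpa using h) _
    · refine le_add_left (le_of_eq ?_)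
      rw [hFs]
      symm
      exact Set.indicator_of_mem (s := {z : Eu d × Eu d | u z.2 ≤ u z.1}) (by simpa using h) _
  set K : ENNReal := C1 + C2 ^ (1/p) * N ^ (1/p') with hK
  have hKtop : K ≠ ⊤ := by
    have a1 : C2 ^ (1/p) ≠ ⊤ := ENNReal.rpow_ne_top_of_nonneg (by positivity) hC2
    have a2 : N ^ (1/p') ≠ ⊤ := ENNReal.rpow_ne_top_of_nonneg (by positivity) hN
    exact ENNReal.add_ne_top.2 ⟨hC1, ENNReal.mul_ne_top a1 a2⟩
  have main : ∀ x, ∫⁻ y, T x y ≤ K * ENNReal.ofReal (u x ^ p) := by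
    intro x
    rcases (hu0 x).eq_or_lt with h0 | h0
    · have hvx : v x = 0 := by simp [v, ← h0, Real.zero_rpow hqpos.ne']
      have : ∀ y, T x y = 0 := by
        intro y
        simp only [T, Set.indicator_apply, F, hvx, zero_mul, ite_self]
      simp [this]
    set t := u x with ht
    set R : ℝ := t ^ (-2 / ((d:ℝ) - 2)) with hR
    have hRpos : 0 < R := by positivity
    let k : Eu d → ENNReal := fun z => (Metric.ball (0:Eu d) R).indicator (fun z => ENNReal.ofReal (‖z‖ ^ (2 - (d:ℝ)))) z
    let m : Eu d → ENNReal := fun z => ((Metric.ball (0:Eu d) R)ᶜ).indicator (fun z => ENNReal.ofReal (‖z‖ ^ (2 - (d:ℝ)))) z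
    have hk : Measurable k := Measurable.indicator (by fun_prop) measurableSet_ball
    have hm : Measurable m := Measurable.indicator (by fun_prop) measurableSet_ball.compl
    have hk' : Measurable fun y => k (x - y) := hk.comp (by fun_prop)
    have hm' : Measurable fun y => m (x - y) := hm.comp (by fun_prop)
    have hTle : ∀ y, T x y ≤ v x * (v x * k (x - y) + m (x - y) * v y) := by
      intro y
      by_cases h : u y ≤ u x
      · have e : T x y = F x y := Set.indicator_of_mem (s := {z : Eu d × Eu d | u z.2 ≤ u z.1}) (by simpa using h) _
        have hvv : v y ≤ v x := by
          simp only [v]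
          exact ENNReal.ofReal_le_ofReal (Real.rpow_le_rpow (hu0 y) h hqpos.le)
        rw [e]
        simp only [F]
        gcongr
        by_cases hA : ‖x - y‖ < R
        · have e : k (x - y) = ENNReal.ofReal (‖x - y‖ ^ (2 - (d:ℝ))) := Set.indicator_of_mem (by simpa using hA) _
          refine le_trans ?_ (le_add_right le_rfl)
          rw [e, mul_comm]
          gcongr
        · push Not at hA
          have e : m (x - y) = ENNReal.ofReal (‖x - y‖ ^ (2 - (d:ℝ))) := Set.indicator_of_mem (by simpa using hA) _
          refine le_trans ?_ (le_add_left le_rfl)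
          rw [e]
      · have e : T x y = 0 := Set.indicator_of_notMem (s := {z : Eu d × Eu d | u z.2 ≤ u z.1}) (by simpa using h) _
        rw [e]; exact zero_le
    have hkx : ∫⁻ y, k (x - y) = ENNReal.ofReal (R ^ (2 - (d:ℝ) + d)) * C1 := by
      rw [lintegral_sub_left_eq_self k x, ← h1 R hRpos, ← lintegral_indicator measurableSet_ball]
    have hmx : ∫⁻ y, m (x - y) ^ p = ENNReal.ofReal (R ^ (-2 * (d:ℝ) + d)) * C2 := by
      rw [lintegral_sub_left_eq_self (fun z => m z ^ p) x, ← h2 R hRpos, ← lintegral_indicator measurableSet_ball.compl]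
      refine lintegral_congr fun z => ?_
      by_cases hz : z ∈ (Metric.ball (0:Eu d) R)ᶜ
      · simp only [m]
        rw [Set.indicator_of_mem hz, Set.indicator_of_mem hz, ENNReal.ofReal_rpow_of_nonneg (by positivity) hppos.le,
          ← Real.rpow_mul (norm_nonneg _)]
        congr 2; rw [hp]; field_simp; ring
      · simp only [m]
        rw [Set.indicator_of_notMem hz, Set.indicator_of_notMem hz, ENNReal.zero_rpow_of_pos hppos]
    have hvp : ∫⁻ y, v y ^ p' = N := by
      rw [hNdef]
      refine lintegral_congr fun y => ?_
      simp only [v]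
      have := hu0 y
      rw [ENNReal.ofReal_rpow_of_nonneg (by positivity) (by positivity), ← Real.rpow_mul (hu0 y)]
      congr 2; rw [hq, hp, hp']; field_simp
    have hH : ∫⁻ y, m (x - y) * v y ≤ (ENNReal.ofReal (R ^ (-2 * (d:ℝ) + d)) * C2) ^ (1/p) * N ^ (1/p') := by
      have := ENNReal.lintegral_mul_le_Lp_mul_Lq volume hpp hm'.aemeasurable hv.aemeasurable
      rw [hmx, hvp] at this
      exact this
    calc ∫⁻ y, T x y ≤ ∫⁻ y, v x * (v x * k (x - y) + m (x - y) * v y) := lintegral_mono hTle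
      _ = v x * (v x * ∫⁻ y, k (x - y)) + v x * ∫⁻ y, m (x - y) * v y := by
        have hs : Measurable fun y => v x * k (x - y) + m (x - y) * v y :=
          (hk'.const_mul _).add (hm'.mul hv)
        rw [lintegral_const_mul _ hs, lintegral_add_left (hk'.const_mul _),
          lintegral_const_mul _ hk', mul_add]
      _ ≤ v x * (v x * (ENNReal.ofReal (R ^ (2 - (d:ℝ) + d)) * C1)) + v x * ((ENNReal.ofReal (R ^ (-2 * (d:ℝ) + d)) * C2) ^ (1/p) * N ^ (1/p')) := by
        rw [hkx]; gcongr
      _ = K * ENNReal.ofReal (t ^ p) := by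
        have f1 : v x * (v x * (ENNReal.ofReal (R ^ (2 - (d:ℝ) + d)) * C1)) = ENNReal.ofReal (t ^ p) * C1 := by
          simp only [v, ← ht]
          rw [← mul_assoc, ← mul_assoc, ← ENNReal.ofReal_mul (by positivity), ← ENNReal.ofReal_mul (by positivity), hR,
            ← Real.rpow_mul h0.le, ← Real.rpow_add h0, ← Real.rpow_add h0]
          congr 3
          rw [hq, hp]; field_simp; ring
        have f2 : v x * ((ENNReal.ofReal (R ^ (-2 * (d:ℝ) + d)) * C2) ^ (1/p) * N ^ (1/p')) = ENNReal.ofReal (t ^ p) * (C2 ^ (1/p) * N ^ (1/p')) := by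
          simp only [v, ← ht]
          rw [ENNReal.mul_rpow_of_nonneg _ _ (by positivity), ENNReal.ofReal_rpow_of_nonneg (by positivity) (by positivity), ← mul_assoc, ← mul_assoc, ← ENNReal.ofReal_mul (by positivity),
            hR, ← Real.rpow_mul h0.le, ← Real.rpow_mul h0.le, ← Real.rpow_add h0, mul_assoc]
          congr 3
          rw [hq, hp]; field_simp; ring
        rw [f1, f2, hK]; ring
  have hfin : ∫⁻ x, ∫⁻ y, T x y ≠ ⊤ := by
    refine ne_top_of_le_ne_top ?_ (lintegral_mono main)
    rw [lintegral_const_mul _ (by fun_prop)]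
    exact ENNReal.mul_ne_top hKtop hN
  have hfin2 : ∫⁻ x, ∫⁻ y, T y x ≠ ⊤ := by
    rw [lintegral_lintegral_swap]
    · exact hfin
    · exact (hT.comp measurable_swap).aemeasurable
  refine ne_top_of_le_ne_top (ENNReal.add_ne_top.2 ⟨hfin, hfin2⟩) ?_
  rw [← lintegral_add_left]
  · refine lintegral_mono fun x => ?_
    rw [← lintegral_add_left]
    · exact lintegral_mono fun y => hFT x y
    · exact hT.comp (by fun_prop : Measurable fun y : Eu d => (x, y))
  · exact hT.lintegral_prod_right'

def kv (d : ℕ) (z : Eu d) : Eu d := ‖z‖ ^ (-(d:ℝ)) • z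

lemma norm_kv {d : ℕ} (hd : 3 ≤ d) (z : Eu d) : ‖kv d z‖ = ‖z‖ ^ (1 - (d:ℝ)) := by
  have hd' : (3:ℝ) ≤ d := by exact_mod_cast hd
  unfold kv
  rcases eq_or_ne z 0 with rfl | hz
  · rw [norm_zero, Real.zero_rpow (x := 1 - (d:ℝ)) (by linarith)]; simp
  · have : 0 < ‖z‖ := norm_pos_iff.2 hz
    rw [norm_smul, Real.norm_of_nonneg (by positivity)]
    nth_rw 2 [← Real.rpow_one ‖z‖]
    rw [← Real.rpow_add this]; congr 1; ring

lemma measurable_kv (d : ℕ) : Measurable (kv d) := by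
  unfold kv; fun_prop

lemma integrable_kv_inner {d : ℕ} (hd : 3 ≤ d) (g : Eu d → Eu d) (x : Eu d) (hg : Measurable g)
    (hint : ∫⁻ y, ENNReal.ofReal (‖x - y‖ ^ (1 - (d:ℝ))) * ENNReal.ofReal ‖g y‖ ≠ ⊤) :
    Integrable (fun y => inner ℝ (g y) (kv d (x - y))) := by
  have hk : Measurable fun y => kv d (x - y) := (measurable_kv d).comp (by fun_prop)
  refine ⟨(hg.inner hk).aestronglyMeasurable, ?_⟩
  refine lt_of_le_of_lt (lintegral_mono fun y => ?_) hint.lt_top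
  rw [← norm_kv hd, ← ENNReal.ofReal_mul (norm_nonneg _), ← ofReal_norm]
  apply ENNReal.ofReal_le_ofReal
  rw [mul_comm]
  exact norm_inner_le_norm _ _

lemma rep_formula {d : ℕ} (hd : 3 ≤ d) (f : Eu d → ℝ) (g : Eu d → Eu d) (x : Eu d) (hg : Measurable g)
    (hc : ContinuousAt f x)
    (hder : ∀ᵐ w : Metric.sphere (0 : Eu d) 1 ∂((volume : Measure (Eu d)).toSphere),
      ∀ r : ℝ, 0 < r → HasGradientAt f (g (x + r • (w : Eu d))) (x + r • (w : Eu d)))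
    (hint : ∫⁻ y, ENNReal.ofReal (‖x - y‖ ^ (1 - (d:ℝ))) * ENNReal.ofReal ‖g y‖ ≠ ⊤)
    (hdec : ∀ᵐ w : Metric.sphere (0 : Eu d) 1 ∂((volume : Measure (Eu d)).toSphere),
      ∀ L : ℝ, Filter.Tendsto (fun r : ℝ => f (x + r • (w : Eu d))) Filter.atTop (nhds L) → L = 0) :
    ∫ y, inner ℝ (g y) (kv d (x - y)) = sphereArea d * f x := by
  have hi := integrable_kv_inner hd g x hg hint
  have hi' : Integrable (fun z => inner ℝ (g (x + z)) (kv d (x - (x + z)))) := hi.comp_add_left x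
  obtain ⟨h1, h2⟩ := polar_int _ hi' hd
  rw [← integral_add_left_eq_self _ x, h2]
  have key : ∀ (w : Metric.sphere (0 : Eu d) 1) (r : ℝ), 0 < r →
      r ^ (d-1) * inner ℝ (g (x + r • (w : Eu d))) (kv d (x - (x + r • (w : Eu d)))) =
        - inner ℝ (g (x + r • (w : Eu d))) (w : Eu d) := by
    intro w r hr
    have hn : ‖x - (x + r • (w : Eu d))‖ = r := by simp [norm_smul, abs_of_pos hr]
    have : x - (x + r • (w : Eu d)) = - (r • (w : Eu d)) := by abel
    unfold kv
    rw [hn, this, inner_smul_right, inner_neg_right, inner_smul_right, ← Real.rpow_natCast]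
    have e : r ^ (((d-1 : ℕ)):ℝ) * r ^ (-(d:ℝ)) * r = 1 := by
      nth_rw 3 [← Real.rpow_one r]
      rw [← Real.rpow_add hr, ← Real.rpow_add hr, Nat.cast_sub (by omega)]
      rw [show ((d:ℝ) - (1:ℕ) + -(d:ℝ) + 1) = 0 by push_cast; ring, Real.rpow_zero]
    linear_combination (- inner ℝ (g (x + r • (w : Eu d))) (w : Eu d)) * e
  have hconst : ∀ᵐ w : Metric.sphere (0 : Eu d) 1 ∂((volume : Measure (Eu d)).toSphere),
      ∫ r in Set.Ioi (0:ℝ), r ^ (d-1) * inner ℝ (g (x + r • (w : Eu d))) (kv d (x - (x + r • (w : Eu d)))) = f x := by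
    filter_upwards [h1, hder, hdec] with w hw1 hw2 hw3
    rw [setIntegral_congr_fun measurableSet_Ioi (fun r hr => key w r hr), integral_neg]
    have hI : IntegrableOn (fun r : ℝ => inner ℝ (g (x + r • (w : Eu d))) (w : Eu d)) (Set.Ioi 0) := by
      have := (integrableOn_congr_fun (fun r hr => key w r hr) measurableSet_Ioi).1 hw1
      have h' := this.neg
      refine h'.congr_fun (fun r _ => ?_) measurableSet_Ioi
      simp
    have hD : ∀ r ∈ Set.Ioi (0:ℝ), HasDerivAt (fun r : ℝ => f (x + r • (w : Eu d)))
        (inner ℝ (g (x + r • (w : Eu d))) (w : Eu d)) r := by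
      intro r hr
      have a := (hw2 r hr).hasFDerivAt
      have b : HasDerivAt (fun r : ℝ => x + r • (w : Eu d)) (w : Eu d) r := by
        simpa using ((hasDerivAt_id r).smul_const (w : Eu d)).const_add x
      have h' := a.comp_hasDerivAt r b
      rw [InnerProductSpace.toDual_apply_apply] at h'
      exact h'
    have hlim := tendsto_limUnder_of_hasDerivAt_of_integrableOn_Ioi hD hI
    rw [hw3 _ hlim] at hlim
    rw [integral_Ioi_of_hasDerivAt_of_tendsto ?_ hD hI hlim]
    · simp
    · apply ContinuousAt.continuousWithinAt
      apply ContinuousAt.comp (g := f) (f := fun r : ℝ => x + r • (w : Eu d))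
      · simpa using hc
      · fun_prop
  rw [integral_congr_ae hconst, integral_const, sphere_total hd, smul_eq_mul]

open scoped Pointwise in
lemma ray_avoid {d : ℕ} (hd : 3 ≤ d) (x x' : Eu d) (hx : x ≠ x') :
    ∀ᵐ w : Metric.sphere (0 : Eu d) 1 ∂((volume : Measure (Eu d)).toSphere),
      ∀ r : ℝ, 0 < r → x + r • (w : Eu d) ≠ x' := by
  have hne : x' - x ≠ 0 := sub_ne_zero.2 hx.symm
  have hn : ‖x' - x‖ ≠ 0 := norm_ne_zero_iff.2 hne
  let w0 : Metric.sphere (0 : Eu d) 1 := ⟨‖x' - x‖⁻¹ • (x' - x), by simp [norm_smul, hn]⟩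
  have h0 : (volume : Measure (Eu d)).toSphere {w0} = 0 := by
    rw [Measure.toSphere_apply' _ (measurableSet_singleton _)]
    have : volume (Set.Ioo (0:ℝ) 1 • ((↑) '' ({w0} : Set (Metric.sphere (0 : Eu d) 1)) : Set (Eu d))) = 0 := by
      refine measure_mono_null (t := ((Submodule.span ℝ {x' - x} : Submodule ℝ (Eu d)) : Set (Eu d))) ?_ ?_
      · rintro z ⟨r, hr, y, ⟨w, hw, rfl⟩, rfl⟩
        rw [Set.mem_singleton_iff] at hw
        subst hw
        simp only [w0, smul_smul]
        exact Submodule.smul_mem _ _ (Submodule.mem_span_singleton_self _)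
      · apply Measure.addHaar_submodule
        intro htop
        have h1 := finrank_span_singleton (K := ℝ) hne
        rw [htop, finrank_top] at h1
        simp at h1
        omega
    rw [this, mul_zero]
  have : ∀ᵐ w : Metric.sphere (0 : Eu d) 1 ∂((volume : Measure (Eu d)).toSphere), w ∉ ({w0} : Set _) :=
    measure_eq_zero_iff_ae_notMem.1 h0
  filter_upwards [this] with w hw r hr hcon
  apply hw
  rw [Set.mem_singleton_iff]
  apply Subtype.ext
  have e : x' - x = r • (w : Eu d) := by rw [← hcon]; abel
  simp only [w0]
  rw [e, norm_smul, Real.norm_of_nonneg hr.le]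
  have : ‖(w : Eu d)‖ = 1 := by simp
  rw [this, mul_one, smul_smul, inv_mul_cancel₀ hr.ne', one_smul]

lemma green_identity {d : ℕ} (hd : 3 ≤ d) (x x' : Eu d) (hx : x ≠ x') :
    ∫ y, inner ℝ (kv d (x' - y)) (kv d (x - y)) = sphereArea d ^ 2 * greenKernel d (x - x') := by
  have hd' : (3:ℝ) ≤ d := by exact_mod_cast hd
  have hd2 : (0:ℝ) < (d:ℝ) - 2 := by linarith
  obtain ⟨C, hC, hCb⟩ := kernel_comp hd
  have hk : Measurable fun y => kv d (x' - y) := (measurable_kv d).comp (by fun_prop)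
  have hk' : Measurable fun y => ((d:ℝ) - 2) • kv d (x' - y) := by
    fun_prop
  have hgrad : ∀ y : Eu d, y ≠ x' → HasGradientAt (fun y : Eu d => ‖y - x'‖ ^ (2 - (d:ℝ)))
      (((d:ℝ) - 2) • kv d (x' - y)) y := by
    intro y hy
    have hpos : 0 < ‖y - x'‖ := norm_pos_iff.2 (sub_ne_zero.2 hy)
    rw [hasGradientAt_iff_hasFDerivAt]
    have h1 : HasFDerivAt (fun y : Eu d => ‖y - x'‖ ^ 2) (2 • (innerSL ℝ (y - x'))) y := by
      have := ((hasFDerivAt_id y).sub_const x').norm_sq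
      simpa using this
    have h2 := h1.rpow_const (p := (2 - (d:ℝ))/2) (Or.inl (by positivity))
    have e0 : (fun y : Eu d => ‖y - x'‖ ^ (2 - (d:ℝ))) = fun y => (‖y - x'‖ ^ 2) ^ ((2 - (d:ℝ))/2) := by
      funext z
      rw [← Real.rpow_natCast, ← Real.rpow_mul (norm_nonneg _)]
      congr 1; push_cast; ring
    rw [e0]
    have e1 : (‖y - x'‖ ^ 2) ^ ((2 - (d:ℝ))/2 - 1) = ‖y - x'‖ ^ (-(d:ℝ)) := by
      rw [← Real.rpow_natCast, ← Real.rpow_mul (norm_nonneg _)]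
      congr 1; push_cast; ring
    have e2 : x' - y = -(y - x') := by abel
    rw [e1] at h2
    have e3 : (InnerProductSpace.toDual ℝ (Eu d)) (((d:ℝ) - 2) • kv d (x' - y)) =
        ((2 - (d:ℝ)) / 2 * ‖y - x'‖ ^ (-(d:ℝ))) • 2 • (innerSL ℝ) (y - x') := by
      refine ContinuousLinearMap.ext fun z => ?_
      rw [kv, e2, norm_neg, InnerProductSpace.toDual_apply_apply]
      simp only [inner_smul_left, inner_neg_left, conj_trivial, smul_apply, innerSL_apply_apply,
        nsmul_eq_mul, smul_eq_mul]
      push_cast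
      ring
    rw [e3]
    exact h2
  have hrep := rep_formula hd (fun y : Eu d => ‖y - x'‖ ^ (2 - (d:ℝ))) (fun y => ((d:ℝ) - 2) • kv d (x' - y)) x
    hk' (hgrad x hx).differentiableAt.continuousAt ?_ ?_ ?_
  · simp only [inner_smul_left] at hrep
    rw [integral_const_mul] at hrep
    have hs := sphereArea_pos hd
    simp only [conj_trivial] at hrep
    rw [greenKernel]
    field_simp
    linarith
  · filter_upwards [ray_avoid hd x x' hx] with w hw r hr
    exact hgrad _ (hw r hr)
  · have e : ∀ y : Eu d, ENNReal.ofReal (‖x - y‖ ^ (1 - (d:ℝ))) * ENNReal.ofReal ‖((d:ℝ) - 2) • kv d (x' - y)‖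
        = ENNReal.ofReal ((d:ℝ) - 2) * (ENNReal.ofReal (‖x - y‖ ^ (1 - (d:ℝ))) * ENNReal.ofReal (‖x' - y‖ ^ (1 - (d:ℝ)))) := by
      intro y
      rw [norm_smul, norm_kv hd, Real.norm_of_nonneg hd2.le, ENNReal.ofReal_mul hd2.le]; ring
    simp only [e]
    rw [lintegral_const_mul _ (by fun_prop)]
    refine ENNReal.mul_ne_top (by simp) (ne_top_of_le_ne_top ?_ (hCb x x' hx))
    exact ENNReal.mul_ne_top hC (by simp)
  · refine Filter.Eventually.of_forall fun w L hL => tendsto_nhds_unique hL ?_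
    have h1 : Filter.Tendsto (fun r : ℝ => ‖x + r • (w : Eu d) - x'‖) Filter.atTop Filter.atTop := by
      refine Filter.tendsto_atTop_mono (f := fun r : ℝ => r + (-‖x' - x‖)) ?_ ?_
      · intro r
        have a : ‖r • (w : Eu d)‖ - ‖x' - x‖ ≤ ‖r • (w : Eu d) - (x' - x)‖ := norm_sub_norm_le _ _
        have b : r ≤ ‖r • (w : Eu d)‖ := by simp [norm_smul, le_abs_self]
        have c : r • (w : Eu d) - (x' - x) = x + r • (w : Eu d) - x' := by abel
        rw [c] at a
        linarith
      · exact Filter.tendsto_atTop_add_const_right _ _ Filter.tendsto_id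
    have h2 := (tendsto_rpow_neg_atTop (y := (d:ℝ) - 2) hd2).comp h1
    simpa [Function.comp_def] using h2

lemma rep_u {d : ℕ} (hd : 3 ≤ d) (u : Eu d → ℝ) (hu : MemD12 d u) (x : Eu d)
    (hint : ∫⁻ y, ENNReal.ofReal (‖x - y‖ ^ (1 - (d:ℝ))) * ENNReal.ofReal ‖gradient u y‖ ≠ ⊤)
    (hg : Measurable (gradient u)) :
    ∫ y, inner ℝ (gradient u y) (kv d (x - y)) = sphereArea d * u x := by
  have hd' : (3:ℝ) ≤ d := by exact_mod_cast hd
  have hd2 : (0:ℝ) < (d:ℝ) - 2 := by linarith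
  obtain ⟨h1, h2, h3⟩ := hu
  set p := 2 * (d : ℝ) / ((d : ℝ) - 2) with hp
  have hppos : 0 < p := by positivity
  refine rep_formula hd u (gradient u) x hg (h1 x).continuousAt ?_ hint ?_
  · exact Filter.Eventually.of_forall fun w r hr => (h1 _).hasGradientAt
  · have h4 : Integrable (fun z => |u (x + z)| ^ p) := h3.comp_add_left x
    obtain ⟨h5, -⟩ := polar_int _ h4 hd
    filter_upwards [h5] with w hw L hL
    have hI : IntegrableOn (fun r : ℝ => |u (x + r • (w : Eu d))| ^ p) (Set.Ioi 1) := by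
      have hw' := hw.mono_set (Set.Ioi_subset_Ioi (zero_le_one (α := ℝ)))
      refine Integrable.mono' hw' ?_ ?_
      · have : Continuous (fun r : ℝ => |u (x + r • (w : Eu d))| ^ p) := by
          have hc := h1.continuous
          refine Continuous.rpow_const (by fun_prop) (fun _ => Or.inr hppos.le)
        exact this.aestronglyMeasurable
      · filter_upwards [ae_restrict_mem measurableSet_Ioi] with r hr
        rw [Real.norm_of_nonneg (by positivity)]
        have : 1 ≤ r ^ (d-1) := one_le_pow₀ (le_of_lt hr)
        exact le_mul_of_one_le_left (by positivity) this
    have hlim : Filter.Tendsto (fun r : ℝ => |u (x + r • (w : Eu d))| ^ p) Filter.atTop (nhds (|L| ^ p)) :=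
      (hL.abs).rpow_const (Or.inr hppos.le)
    have hz : |L| ^ p = 0 := by
      refine IntegrableAtFilter.eq_zero_of_tendsto (μ := volume) (l := Filter.atTop) ⟨Set.Ioi 1, Filter.Ioi_mem_atTop 1, hI⟩ ?_ hlim
      intro s hs
      obtain ⟨b, hb⟩ := Filter.mem_atTop_sets.1 hs
      have : volume (Set.Ici b) ≤ volume s := measure_mono hb
      simpa using this
    simpa using (Real.rpow_eq_zero (abs_nonneg _) hppos.ne').1 hz

lemma measurable_grad {d : ℕ} (u : Eu d → ℝ) : Measurable (gradient u) := by
  unfold gradient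
  exact (LinearIsometryEquiv.continuous _).measurable.comp (measurable_fderiv ℝ u)

set_option maxHeartbeats 1600000 in
lemma core {d : ℕ} (hd : 3 ≤ d) (u : Eu d → ℝ) (hu0 : ∀ x, 0 ≤ u x) (hu : MemD12 d u) (a : ℝ) :
    2 * a * ∫ x, u x ^ (((d:ℝ) + 2) / ((d:ℝ) - 2)) * u x ≤
      a ^ 2 * (∫ x, ‖gradient u x‖ ^ 2) + ∫ x, u x ^ (((d : ℝ) + 2) / ((d : ℝ) - 2)) *
        invLap d (fun y => u y ^ (((d : ℝ) + 2) / ((d : ℝ) - 2))) x := by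
  have hd' : (3:ℝ) ≤ d := by exact_mod_cast hd
  have hd2 : (0:ℝ) < (d:ℝ) - 2 := by linarith
  have hnt := eu_nontrivial hd
  have hum : Measurable u := hu.1.continuous.measurable
  have hgm : Measurable (gradient u) := measurable_grad u
  obtain ⟨C, hC, hCb⟩ := kernel_comp hd
  have hN : ∫⁻ x, ENNReal.ofReal (u x ^ (2 * (d:ℝ) / ((d:ℝ) - 2))) ≠ ⊤ := by
    have h := hu.2.2
    have e : (fun x => |u x| ^ (2 * (d : ℝ) / ((d : ℝ) - 2))) = fun x => u x ^ (2 * (d : ℝ) / ((d : ℝ) - 2)) := by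
      funext x; rw [abs_of_nonneg (hu0 x)]
    rw [e] at h
    exact h.lintegral_lt_top.ne
  have hH := hls_finite hd u hu0 hum hN
  set q : ℝ := ((d:ℝ) + 2) / ((d:ℝ) - 2) with hq
  set V : Eu d → ℝ := fun x => u x ^ q with hV
  have hV0 : ∀ x, 0 ≤ V x := fun x => Real.rpow_nonneg (hu0 x) _
  have hVm : Measurable V := by fun_prop
  have hkm : ∀ y : Eu d, Measurable fun x => kv d (x - y) := fun y => (measurable_kv d).comp (by fun_prop)
  have hσ := sphereArea_pos hd
  set σ := sphereArea d with hσd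
  let j : Eu d → Eu d → ENNReal := fun y x => ENNReal.ofReal (V x) * ENNReal.ofReal (‖x - y‖ ^ (1 - (d:ℝ)))
  have hjm : Measurable (fun z : Eu d × Eu d => j z.1 z.2) := by fun_prop
  have hjm' : ∀ y, Measurable (j y) := fun y => by fun_prop
  let J : Eu d → ENNReal := fun y => ∫⁻ x, j y x
  have hJm : Measurable J := hjm.lintegral_prod_right'
  let M : Eu d × (Eu d × Eu d) → ENNReal := fun p => j p.1 p.2.1 * j p.1 p.2.2
  have hMm : Measurable M := by
    have h1 : Measurable fun p : Eu d × (Eu d × Eu d) => j p.1 p.2.1 :=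
      hjm.comp (by fun_prop : Measurable fun p : Eu d × (Eu d × Eu d) => (p.1, p.2.1))
    have h2 : Measurable fun p : Eu d × (Eu d × Eu d) => j p.1 p.2.2 :=
      hjm.comp (by fun_prop : Measurable fun p : Eu d × (Eu d × Eu d) => (p.1, p.2.2))
    exact h1.mul h2
  -- triple integral is finite
  have hMfin : ∫⁻ p, M p ∂(volume.prod (volume.prod volume)) ≠ ⊤ := by
    rw [lintegral_prod_symm _ hMm.aemeasurable]
    have hm2 : Measurable fun z : Eu d × Eu d => ∫⁻ y, M (y, z) := hMm.lintegral_prod_left'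
    rw [lintegral_prod _ hm2.aemeasurable]
    refine ne_top_of_le_ne_top (ENNReal.mul_ne_top hC hH) ?_
    rw [← lintegral_const_mul' _ _ hC]
    refine lintegral_mono fun x => ?_
    rw [← lintegral_const_mul' _ _ hC]
    refine lintegral_mono_ae ?_
    have hae : ∀ᵐ x' : Eu d, x' ≠ x := by
      simp [ae_iff]
    filter_upwards [hae] with x' hx'
    have e : ∀ y, M (y, (x, x')) = ENNReal.ofReal (V x) * ENNReal.ofReal (V x') *
        (ENNReal.ofReal (‖x - y‖ ^ (1 - (d:ℝ))) * ENNReal.ofReal (‖x' - y‖ ^ (1 - (d:ℝ)))) := by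
      intro y; simp only [M, j]; ring
    simp only [e]
    rw [lintegral_const_mul _ (by fun_prop)]
    refine (mul_le_mul_right (hCb x x' hx'.symm) _).trans (le_of_eq ?_)
    ring
  have hJ2 : ∫⁻ y, J y * J y ≠ ⊤ := by
    rw [lintegral_prod _ hMm.aemeasurable] at hMfin
    refine ne_of_eq_of_ne (lintegral_congr fun y => ?_) hMfin
    simp only [M, J]
    rw [lintegral_prod_mul (hjm' y).aemeasurable (hjm' y).aemeasurable]
  have hJae : ∀ᵐ y, J y < ⊤ := by
    filter_upwards [ae_lt_top (hJm.mul hJm) hJ2] with y hy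
    by_contra hcon
    simp only [not_lt, top_le_iff] at hcon
    simp [hcon] at hy
  have hG2 : ∫⁻ y, ENNReal.ofReal ‖gradient u y‖ * ENNReal.ofReal ‖gradient u y‖ ≠ ⊤ := by
    have h := hu.2.1.lintegral_lt_top.ne
    convert h using 3 with y
    rw [← ENNReal.ofReal_mul (norm_nonneg _), sq]
  have hGJ : ∫⁻ y, ENNReal.ofReal ‖gradient u y‖ * J y ≠ ⊤ := by
    refine ne_top_of_le_ne_top (ENNReal.add_ne_top.2 ⟨hG2, hJ2⟩) ?_
    rw [← lintegral_add_left (by fun_prop)]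
    refine lintegral_mono fun y => ?_
    rcases le_total (ENNReal.ofReal ‖gradient u y‖) (J y) with h | h
    · exact (mul_le_mul_left h _).trans (le_add_left le_rfl)
    · exact (mul_le_mul_right h _).trans (le_add_right le_rfl)
  -- vector field
  let F : Eu d → Eu d := fun y => ∫ x, V x • kv d (x - y)
  have hjnorm : ∀ y x, ‖V x • kv d (x - y)‖ₑ = j y x := by
    intro y x
    rw [enorm_smul, ← ofReal_norm, ← ofReal_norm, norm_kv hd, Real.norm_of_nonneg (hV0 x)]
  have hFint : ∀ y, J y < ⊤ → Integrable (fun x => V x • kv d (x - y)) := by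
    intro y hy
    refine ⟨(hVm.smul (hkm y)).aestronglyMeasurable, ?_⟩
    change ∫⁻ x, _ < ⊤
    simp only [hjnorm]
    exact hy
  -- first Fubini
  have hP : Integrable (fun p : Eu d × Eu d => inner ℝ (gradient u p.1) (V p.2 • kv d (p.2 - p.1))) (volume.prod volume) := by
    have hm : Measurable (fun p : Eu d × Eu d => inner ℝ (gradient u p.1) (V p.2 • kv d (p.2 - p.1))) := by
      refine (hgm.comp measurable_fst).inner ((hVm.comp measurable_snd).smul ((measurable_kv d).comp (by fun_prop)))
    refine ⟨hm.aestronglyMeasurable, ?_⟩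
    unfold HasFiniteIntegral
    rw [lintegral_prod _ hm.enorm.aemeasurable]
    refine lt_of_le_of_lt (lintegral_mono fun y => ?_) hGJ.lt_top
    rw [← lintegral_const_mul _ (hjm' y)]
    refine lintegral_mono fun x => ?_
    rw [← hjnorm, ← ofReal_norm, ← ofReal_norm, ← ENNReal.ofReal_mul (norm_nonneg _)]
    exact ENNReal.ofReal_le_ofReal (norm_inner_le_norm _ _)
  have hPy : ∀ᵐ y, ∫ x, inner ℝ (gradient u y) (V x • kv d (x - y)) = inner ℝ (gradient u y) (F y) := by
    filter_upwards [hJae] with y hy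
    exact integral_inner (hFint y hy) _
  have hIF : Integrable (fun y => inner ℝ (gradient u y) (F y)) :=
    hP.integral_prod_left.congr hPy
  have hA : ∫ y, inner ℝ (gradient u y) (F y) = σ * ∫ x, V x * u x := by
    rw [← integral_congr_ae hPy, integral_integral_swap hP, ← integral_const_mul]
    refine integral_congr_ae ?_
    have hfin : ∫⁻ x, ENNReal.ofReal (V x) * ∫⁻ y, ENNReal.ofReal (‖x - y‖ ^ (1 - (d:ℝ))) * ENNReal.ofReal ‖gradient u y‖ ≠ ⊤ := by
      convert hGJ using 1
      have e1 : ∀ y, ENNReal.ofReal ‖gradient u y‖ * J y = ∫⁻ x, ENNReal.ofReal ‖gradient u y‖ * j y x := fun y =>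
        (lintegral_const_mul _ (hjm' y)).symm
      simp only [e1]
      rw [lintegral_lintegral_swap]
      · refine lintegral_congr fun x => ?_
        rw [← lintegral_const_mul _ (by fun_prop)]
        refine lintegral_congr fun y => ?_
        simp only [j]; ring
      · have : Measurable fun z : Eu d × Eu d => ENNReal.ofReal ‖gradient u z.1‖ * j z.1 z.2 := by
          have := hgm.comp (measurable_fst : Measurable (Prod.fst : Eu d × Eu d → Eu d))
          exact (this.norm.ennreal_ofReal).mul hjm
        exact this.aemeasurable
    have hm0 : Measurable fun x => ENNReal.ofReal (V x) * ∫⁻ y, ENNReal.ofReal (‖x - y‖ ^ (1 - (d:ℝ))) * ENNReal.ofReal ‖gradient u y‖ := by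
      refine (by fun_prop : Measurable fun x => ENNReal.ofReal (V x)).mul ?_
      have : Measurable fun z : Eu d × Eu d => ENNReal.ofReal (‖z.1 - z.2‖ ^ (1 - (d:ℝ))) * ENNReal.ofReal ‖gradient u z.2‖ := by
        have := hgm.comp (measurable_snd : Measurable (Prod.snd : Eu d × Eu d → Eu d))
        exact (by fun_prop : Measurable fun z : Eu d × Eu d => ENNReal.ofReal (‖z.1 - z.2‖ ^ (1 - (d:ℝ)))).mul this.norm.ennreal_ofReal
      exact this.lintegral_prod_right'
    filter_upwards [ae_lt_top hm0 hfin] with x hx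
    simp only [inner_smul_right]
    rw [integral_const_mul]
    rcases (hV0 x).eq_or_lt with h0 | h0
    · rw [← h0]; simp
    · have hx' : ∫⁻ y, ENNReal.ofReal (‖x - y‖ ^ (1 - (d:ℝ))) * ENNReal.ofReal ‖gradient u y‖ ≠ ⊤ := by
        intro htop
        rw [htop, ENNReal.mul_top (by simpa using h0)] at hx
        exact lt_irrefl _ hx
      rw [rep_u hd u hu x hx' hgm]; ring
  -- second Fubini
  have hQ : Integrable (fun p : Eu d × (Eu d × Eu d) => inner ℝ (V p.2.2 • kv d (p.2.2 - p.1)) (V p.2.1 • kv d (p.2.1 - p.1)))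
      (volume.prod (volume.prod volume)) := by
    have hm : Measurable (fun p : Eu d × (Eu d × Eu d) => inner ℝ (V p.2.2 • kv d (p.2.2 - p.1)) (V p.2.1 • kv d (p.2.1 - p.1))) := by
      have hk := measurable_kv d
      have h1 : Measurable fun p : Eu d × (Eu d × Eu d) => V p.2.2 • kv d (p.2.2 - p.1) :=
        (hVm.comp (by fun_prop)).smul (hk.comp (by fun_prop))
      have h2 : Measurable fun p : Eu d × (Eu d × Eu d) => V p.2.1 • kv d (p.2.1 - p.1) :=
        (hVm.comp (by fun_prop)).smul (hk.comp (by fun_prop))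
      exact h1.inner h2
    refine ⟨hm.aestronglyMeasurable, ?_⟩
    refine lt_of_le_of_lt (lintegral_mono fun p => ?_) hMfin.lt_top
    simp only [M]
    rw [← hjnorm, ← hjnorm, ← ofReal_norm, ← ofReal_norm, ← ofReal_norm, ← ENNReal.ofReal_mul (norm_nonneg _), mul_comm]
    exact ENNReal.ofReal_le_ofReal (norm_inner_le_norm _ _)
  have hQy : ∀ᵐ y, ∫ z : Eu d × Eu d, inner ℝ (V z.2 • kv d (z.2 - y)) (V z.1 • kv d (z.1 - y)) ∂(volume.prod volume) = ‖F y‖ ^ 2 := by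
    filter_upwards [hJae, hQ.prod_right_ae] with y hy hy2
    rw [integral_prod _ hy2, ← real_inner_self_eq_norm_sq]
    have e : ∀ x, ∫ x', inner ℝ (V x' • kv d (x' - y)) (V x • kv d (x - y)) = inner ℝ (F y) (V x • kv d (x - y)) := by
      intro x
      simp only [real_inner_comm (V x • kv d (x - y))]
      rw [integral_inner (hFint y hy)]
    simp only [e]
    exact integral_inner (hFint y hy) _
  have hIF2 : Integrable (fun y => ‖F y‖ ^ 2) := hQ.integral_prod_left.congr hQy
  have hB : ∫ y, ‖F y‖ ^ 2 = σ ^ 2 * ∫ x, V x * invLap d V x := by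
    rw [← integral_congr_ae hQy, integral_integral_swap hQ, integral_prod _ hQ.integral_prod_right, ← integral_const_mul]
    refine integral_congr_ae (Filter.Eventually.of_forall fun x => ?_)
    simp only [invLap]
    rw [← integral_const_mul, ← integral_const_mul]
    refine integral_congr_ae ?_
    have hae : ∀ᵐ x' : Eu d, x' ≠ x := by
      simp [ae_iff]
    filter_upwards [hae] with x' hx'
    simp only [inner_smul_left, inner_smul_right, conj_trivial]
    rw [integral_const_mul, integral_const_mul, green_identity hd x x' hx'.symm]
    ring
  -- conclusion
  have hpt : ∀ y, 2 * a * σ⁻¹ * inner ℝ (gradient u y) (F y) ≤ a ^ 2 * ‖gradient u y‖ ^ 2 + (σ⁻¹) ^ 2 * ‖F y‖ ^ 2 := by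
    intro y
    have h := norm_sub_sq_real (a • gradient u y) (σ⁻¹ • F y)
    have h0 : 0 ≤ ‖a • gradient u y - σ⁻¹ • F y‖ ^ 2 := sq_nonneg _
    rw [norm_smul, norm_smul, mul_pow, mul_pow, inner_smul_left, inner_smul_right, Real.norm_eq_abs, Real.norm_eq_abs, sq_abs, sq_abs] at h
    simp only [conj_trivial] at h
    linarith
  have hfinal := integral_mono (hIF.const_mul (2 * a * σ⁻¹)) ((hu.2.1.const_mul (a^2)).add (hIF2.const_mul ((σ⁻¹)^2))) hpt
  simp only [Pi.add_apply] at hfinal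
  rw [integral_add (hu.2.1.const_mul (a^2)) (hIF2.const_mul ((σ⁻¹)^2)), integral_const_mul, integral_const_mul, integral_const_mul, hA, hB] at hfinal
  have r1 : 2 * a * σ⁻¹ * (σ * ∫ x, V x * u x) = 2 * a * ∫ x, V x * u x := by
    field_simp
  have r2 : (σ⁻¹) ^ 2 * (σ ^ 2 * ∫ x, V x * invLap d V x) = ∫ x, V x * invLap d V x := by
    field_simp
  rw [r1, r2] at hfinal
  exact hfinal

/-- improved Sobolev inequality controlling the Hardy-Littlewood-Sobolev
deficit by the Sobolev deficit, with proportionality constant `S_d`. -/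
theorem improved_sobolev_hls (d : ℕ) (hd : 3 ≤ d)
    (u : EuclideanSpace ℝ (Fin d) → ℝ) (hu0 : ∀ x, 0 ≤ u x) (hu : MemD12 d u) :
    sobolevConst d *
        lpNorm' (2 * (d : ℝ) / ((d : ℝ) + 2))
          (fun x => u x ^ (((d : ℝ) + 2) / ((d : ℝ) - 2))) ^ (2 : ℝ) -
      ∫ x, u x ^ (((d : ℝ) + 2) / ((d : ℝ) - 2)) *
        invLap d (fun y => u y ^ (((d : ℝ) + 2) / ((d : ℝ) - 2))) x ≤
    sobolevConst d *
      lpNorm' (2 * (d : ℝ) / ((d : ℝ) - 2)) u ^ ((8 : ℝ) / ((d : ℝ) - 2)) *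
      (sobolevConst d * (∫ x, ‖gradient u x‖ ^ 2) -
        lpNorm' (2 * (d : ℝ) / ((d : ℝ) - 2)) u ^ (2 : ℝ)) := by
  have hd' : (3:ℝ) ≤ d := by exact_mod_cast hd
  have hd2 : (0:ℝ) < (d:ℝ) - 2 := by linarith
  have hd0 : (0:ℝ) < (d:ℝ) := by linarith
  set N : ℝ := ∫ x, u x ^ (2 * (d:ℝ) / ((d:ℝ) - 2)) with hN
  have hN0 : 0 ≤ N := integral_nonneg fun x => Real.rpow_nonneg (hu0 x) _
  have e1 : ∀ x, |u x ^ (((d:ℝ) + 2) / ((d:ℝ) - 2))| ^ (2 * (d:ℝ) / ((d:ℝ) + 2)) = u x ^ (2 * (d:ℝ) / ((d:ℝ) - 2)) := by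
    intro x
    rw [abs_of_nonneg (Real.rpow_nonneg (hu0 x) _), ← Real.rpow_mul (hu0 x)]
    congr 1; field_simp
  have e2 : ∀ x, |u x| ^ (2 * (d:ℝ) / ((d:ℝ) - 2)) = u x ^ (2 * (d:ℝ) / ((d:ℝ) - 2)) := by
    intro x; rw [abs_of_nonneg (hu0 x)]
  have e3 : ∀ x, u x ^ (((d:ℝ) + 2) / ((d:ℝ) - 2)) * u x = u x ^ (2 * (d:ℝ) / ((d:ℝ) - 2)) := by
    intro x
    nth_rw 2 [← Real.rpow_one (u x)]
    rw [← Real.rpow_add_of_nonneg (hu0 x) (by positivity) zero_le_one]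
    congr 1; field_simp; ring
  have hc := core hd u hu0 hu (sobolevConst d * N ^ (2 / (d:ℝ)))
  simp only [e3] at hc
  rw [← hN] at hc
  simp only [lpNorm', e1, e2]
  rw [← hN]
  have f1 : (N ^ (1 / (2 * (d:ℝ) / ((d:ℝ) + 2)))) ^ (2:ℝ) = N ^ (2 / (d:ℝ)) * N := by
    nth_rw 3 [← Real.rpow_one N]
    rw [← Real.rpow_mul hN0, ← Real.rpow_add_of_nonneg hN0 (by positivity) zero_le_one]
    congr 1; field_simp; ring
  have f2 : (N ^ (1 / (2 * (d:ℝ) / ((d:ℝ) - 2)))) ^ ((8:ℝ) / ((d:ℝ) - 2)) = (N ^ (2 / (d:ℝ))) ^ 2 := by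
    rw [← Real.rpow_mul hN0, ← Real.rpow_mul_natCast hN0]
    congr 1; push_cast; field_simp; ring
  have f3 : (N ^ (2 / (d:ℝ))) * (N ^ (1 / (2 * (d:ℝ) / ((d:ℝ) - 2)))) ^ (2:ℝ) = N := by
    rw [← Real.rpow_mul hN0, ← Real.rpow_add_of_nonneg hN0 (by positivity) (by positivity)]
    nth_rw 2 [← Real.rpow_one N]
    congr 1; field_simp; ring
  rw [f1, f2]
  set B := (N ^ (1 / (2 * (d:ℝ) / ((d:ℝ) - 2)))) ^ (2:ℝ)
  set A := N ^ (2 / (d:ℝ))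
  set S := sobolevConst d
  have f4 : S * A ^ 2 * B = S * A * N := by
    rw [← f3]; ring
  linarith [hc, f4]
end
end

section
/- Let d be a real number with d > 2 and set s_d = (4/(d(d−2))) (Γ((d+1)/2)/(√π Γ(d/2)))^{2/d}. For every nonnegative function v on (0,∞) with ∫_0^∞ v^{2d/(d+2)} r^{d−1} dr finite, one has ∫_0^∞ v K[v] r^{d−1} dr ≤ s_d ( ∫_0^∞ v^{2d/(d+2)} r^{d−1} dr )^{1+2/d}. -/
open MeasureTheory Real

noncomputable section

/-- The radial inverse Laplacian with real dimension parameter `d`: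
`K[v](r) = ∫_r^∞ s^{1−d} ∫_0^s v(t) t^{d−1} dt ds`. -/
def radInvLap (d : ℝ) (v : ℝ → ℝ) (r : ℝ) : ℝ :=
  ∫ s in Set.Ioi r, s ^ (1 - d) * ∫ t in Set.Ioo (0 : ℝ) s, v t * t ^ (d - 1)

/-- The sharp radial Sobolev constant with real dimension parameter `d`:
`s_d = (4/(d(d−2))) (Γ((d+1)/2)/(√π Γ(d/2)))^{2/d}`. -/
def sRad (d : ℝ) : ℝ :=
  4 / (d * (d - 2)) *
    (Real.Gamma ((d + 1) / 2) / (Real.sqrt Real.pi * Real.Gamma (d / 2))) ^ ((2 : ℝ) / d)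


lemma rh_beta (a : ℝ) (ha : 0 < a) :
    ∫ x in (0:ℝ)..1, x ^ (a - 1) * √(1 - x) = Gamma a * Gamma (3/2) / Gamma (a + 3/2) := by
  have h := Complex.betaIntegral_eq_Gamma_mul_div (a : ℂ) ((3/2 : ℝ) : ℂ) (by simpa using ha)
    (by simp only [Complex.ofReal_re]; norm_num)
  rw [Complex.Gamma_ofReal, Complex.Gamma_ofReal, ← Complex.ofReal_add, Complex.Gamma_ofReal] at h
  have h2 : Complex.betaIntegral (a : ℂ) ((3/2 : ℝ) : ℂ)
      = ((∫ x in (0:ℝ)..1, x ^ (a - 1) * √(1 - x) : ℝ) : ℂ) := by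
    rw [Complex.betaIntegral, ← intervalIntegral.integral_ofReal]
    refine intervalIntegral.integral_congr fun x hx => ?_
    rw [Set.uIcc_of_le zero_le_one] at hx
    rw [Real.sqrt_eq_rpow, Complex.ofReal_mul, Complex.ofReal_cpow hx.1,
      Complex.ofReal_cpow (by linarith [hx.2])]
    congr 2
    · push_cast; ring
    · push_cast; ring
    · push_cast; ring
  rw [h2] at h
  exact_mod_cast h

lemma rh_H1 (a : ℝ) (ha : 0 < a) :
    ∫ x in (0:ℝ)..1, x * √(1 - x ^ (2 / a)) =
      √π * Gamma (a + 1) / Gamma (a + 3/2) / 4 := by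
  have key := integral_comp_rpow_Ioi
    ((Set.Ioc (0:ℝ) 1).indicator fun y : ℝ => y * √(1 - y ^ (2 / a))) (p := a / 2) (by positivity)
  rw [setIntegral_indicator measurableSet_Ioc] at key
  have e1 : Set.Ioi (0:ℝ) ∩ Set.Ioc 0 1 = Set.Ioc 0 1 := by
    ext x; simp only [Set.mem_inter_iff, Set.mem_Ioi, Set.mem_Ioc]; tauto
  rw [e1] at key
  rw [intervalIntegral.integral_of_le zero_le_one, ← key]
  have e2 : ∀ x ∈ Set.Ioi (0:ℝ), (|a / 2| * x ^ (a / 2 - 1)) •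
      (Set.Ioc (0:ℝ) 1).indicator (fun y : ℝ => y * √(1 - y ^ (2 / a))) (x ^ (a / 2)) =
      (Set.Ioc (0:ℝ) 1).indicator (fun x => a / 2 * (x ^ (a - 1) * √(1 - x))) x := by
    intro x hx
    have hx : 0 < x := hx
    have hiff : x ^ (a / 2) ∈ Set.Ioc (0:ℝ) 1 ↔ x ∈ Set.Ioc (0:ℝ) 1 := by
      simp only [Set.mem_Ioc, hx, rpow_pos_of_pos hx, true_and]
      rw [← Real.rpow_le_rpow_iff hx.le zero_le_one (show 0 < a / 2 by positivity), Real.one_rpow]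
    by_cases hm : x ∈ Set.Ioc (0:ℝ) 1
    · rw [Set.indicator_of_mem (hiff.2 hm), Set.indicator_of_mem hm, abs_of_pos (by positivity),
        ← Real.rpow_mul hx.le, show a / 2 * (2 / a) = 1 by field_simp, Real.rpow_one, smul_eq_mul,
        show x ^ (a - 1) = x ^ (a / 2 - 1) * x ^ (a / 2) by
          rw [← Real.rpow_add hx]; congr 1; ring]
      ring
    · rw [Set.indicator_of_notMem (fun h => hm (hiff.1 h)), Set.indicator_of_notMem hm, smul_zero]
  rw [setIntegral_congr_fun measurableSet_Ioi e2, setIntegral_indicator measurableSet_Ioc, e1,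
    ← intervalIntegral.integral_of_le zero_le_one, intervalIntegral.integral_const_mul,
    rh_beta a ha, Real.Gamma_add_one ha.ne', show (3/2 : ℝ) = 1/2 + 1 by norm_num,
    Real.Gamma_add_one (by norm_num), Real.Gamma_one_half_eq]
  ring

lemma rh_HM (a M : ℝ) (ha : 0 < a) (hM : 0 < M) :
    ∫ x in (0:ℝ)..M, a * x * √(1 - (x / M) ^ (2 / a)) =
      a * (√π * Gamma (a + 1) / Gamma (a + 3/2)) * M ^ 2 / 4 := by
  have h := intervalIntegral.integral_comp_div (a := 0) (b := M)
    (fun y => a * M * (y * √(1 - y ^ (2 / a)))) hM.ne'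
  rw [zero_div, div_self hM.ne', intervalIntegral.integral_const_mul (a := 0) (b := 1), rh_H1 a ha, smul_eq_mul] at h
  have e : ∀ x : ℝ, a * x * √(1 - (x / M) ^ (2 / a)) =
      a * M * (x / M * √(1 - (x / M) ^ (2 / a))) := by
    intro x; field_simp
  simp_rw [e]
  rw [h]; ring

lemma rh_pt (a M r w g σ : ℝ) (ha : 0 < a) (hM : 0 < M) (hr : 0 < r) (hw : 0 ≤ w)
    (hσ : σ ^ 2 = 1) (hle : r ^ a * w ≤ M) :
    (σ * 2 * (a * (r ^ a * w) * √(1 - ((r ^ a * w) / M) ^ (2 / a))) - 2 * a * (r ^ a * w)) *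
      (a * r ^ (a - 1) * w + r ^ a * (-g)) ≤
    g ^ 2 * r ^ (2 * a + 1) - a ^ 2 * M ^ (-(2 / a)) * (w ^ ((2 * a + 2) / a) * r ^ (2 * a + 1)) := by
  set φ := r ^ a * w with hφ
  have hφ0 : 0 ≤ φ := by positivity
  set H := a * φ * √(1 - (φ / M) ^ (2 / a)) with hH
  set c := a ^ 2 * M ^ (-(2 / a)) with hc
  have hH2 : H ^ 2 = a ^ 2 * φ ^ 2 - c * φ ^ ((2 * a + 2) / a) := by
    have h1 : (φ / M) ^ (2 / a) ≤ 1 :=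
      Real.rpow_le_one (by positivity) ((div_le_one hM).2 hle) (by positivity)
    rw [hH, mul_pow, Real.sq_sqrt (by linarith), hc, show (2 * a + 2) / a = 2 + 2 / a by field_simp,
      Real.rpow_add_of_nonneg hφ0 (by norm_num) (by positivity), Real.div_rpow hφ0 hM.le,
      Real.rpow_neg hM.le, Real.rpow_two]
    field_simp
  have hφq : φ ^ ((2 * a + 2) / a) = w ^ ((2 * a + 2) / a) * r ^ (2 * a + 1) * r := by
    rw [hφ, Real.mul_rpow (by positivity) hw, ← Real.rpow_mul hr.le,
      show a * ((2 * a + 2) / a) = 2 * a + 1 + 1 by field_simp; ring, Real.rpow_add_one hr.ne']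
    ring
  have hr1 : r ^ (a - 1) * r = r ^ a := by
    rw [← Real.rpow_add_one hr.ne']; congr 1; ring
  have hr2 : r ^ (2 * a + 1) * r = (r ^ a * r) ^ 2 := by
    rw [← Real.rpow_add_one hr.ne', ← Real.rpow_add_one hr.ne', ← Real.rpow_natCast,
      ← Real.rpow_mul hr.le]
    congr 1; push_cast; ring
  have hψ : (a * r ^ (a - 1) * w + r ^ a * (-g)) * r = a * φ - r ^ a * r * g := by
    rw [hφ, ← hr1]; ring
  set P := a * r ^ (a - 1) * w + r ^ a * (-g)
  refine le_of_mul_le_mul_right ?_ hr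
  have e1 : (g ^ 2 * r ^ (2 * a + 1) - c * (w ^ ((2 * a + 2) / a) * r ^ (2 * a + 1))) * r =
      (a * φ - P * r) ^ 2 - (a ^ 2 * φ ^ 2 - H ^ 2) := by
    rw [hH2, hφq, hψ]
    have : g ^ 2 * r ^ (2 * a + 1) * r = (r ^ a * r * g) ^ 2 := by
      rw [mul_assoc, hr2]; ring
    linear_combination this
  rw [e1]
  nlinarith [sq_nonneg (P * r - σ * H)]

lemma rh_calib (a : ℝ) (ha : 0 < a) (w g : ℝ → ℝ) (hw0 : ∀ r, 0 < r → 0 ≤ w r)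
    (hder : ∀ r, 0 < r → HasDerivAt w (-g r) r)
    (hl0 : Filter.Tendsto (fun r => r ^ a * w r) (nhdsWithin 0 (Set.Ioi 0)) (nhds 0))
    (hl1 : Filter.Tendsto (fun r => r ^ a * w r) Filter.atTop (nhds 0))
    (hE : IntegrableOn (fun r => g r ^ 2 * r ^ (2 * a + 1)) (Set.Ioi 0))
    (hQ : IntegrableOn (fun r => w r ^ ((2 * a + 2) / a) * r ^ (2 * a + 1)) (Set.Ioi 0))
    (hne : ∃ r, 0 < r ∧ w r ≠ 0) :
    ∃ M, 0 < M ∧ a ^ 2 * M ^ (-(2 / a)) *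
        (∫ r in Set.Ioi 0, w r ^ ((2 * a + 2) / a) * r ^ (2 * a + 1)) +
        a * (√π * Gamma (a + 1) / Gamma (a + 3/2)) * M ^ 2 ≤
      ∫ r in Set.Ioi 0, g r ^ 2 * r ^ (2 * a + 1) := by
  obtain ⟨r1, hr1, hw1⟩ := hne
  have hder' : ∀ r, 0 < r → HasDerivAt (fun r => r ^ a * w r)
      (a * r ^ (a - 1) * w r + r ^ a * (-g r)) r := fun r hr =>
    (Real.hasDerivAt_rpow_const (Or.inl hr.ne')).mul (hder r hr)
  have hφ0 : ∀ r, 0 < r → 0 ≤ r ^ a * w r := fun r hr =>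
    mul_nonneg (Real.rpow_nonneg hr.le _) (hw0 r hr)
  have hpos1 : 0 < r1 ^ a * w r1 :=
    mul_pos (Real.rpow_pos_of_pos hr1 _) (lt_of_le_of_ne (hw0 r1 hr1) hw1.symm)
  -- the maximum
  obtain ⟨r0, hr0, hmax⟩ : ∃ r0, 0 < r0 ∧ ∀ r, 0 < r → r ^ a * w r ≤ r0 ^ a * w r0 := by
    obtain ⟨x, hx, hx'⟩ : ∃ x, 0 < x ∧ ∀ r, 0 < r → r < x → r ^ a * w r < r1 ^ a * w r1 := by
      have := hl0.eventually (gt_mem_nhds hpos1)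
      rw [eventually_nhdsWithin_iff, Metric.eventually_nhds_iff] at this
      obtain ⟨ε, hε, h⟩ := this
      refine ⟨ε, hε, fun r hr hrε => h ?_ hr⟩
      rw [Real.dist_eq, sub_zero, abs_of_pos hr]; exact hrε
    obtain ⟨y, hy⟩ := Filter.eventually_atTop.1 (hl1.eventually (gt_mem_nhds hpos1))
    have hr1x : x ≤ r1 := by
      by_contra hlt; exact lt_irrefl _ (hx' r1 hr1 (not_le.1 hlt))
    have hr1y : r1 ≤ y := by
      by_contra hlt; exact lt_irrefl _ (hy r1 (not_le.1 hlt).le)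
    obtain ⟨r0, hr0, hm⟩ := (isCompact_Icc (a := x) (b := y)).exists_isMaxOn ⟨r1, hr1x, hr1y⟩
      (f := fun r => r ^ a * w r)
      (fun r hr => (hder' r (hx.trans_le hr.1)).continuousAt.continuousWithinAt)
    refine ⟨r0, hx.trans_le hr0.1, fun r hr => ?_⟩
    have h1 : r1 ^ a * w r1 ≤ r0 ^ a * w r0 := hm ⟨hr1x, hr1y⟩
    rcases lt_or_ge r x with h | h
    · exact (hx' r hr h).le.trans h1
    rcases lt_or_ge y r with h' | h'
    · exact (hy r h'.le).le.trans h1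
    · exact hm ⟨h, h'⟩
  set M := r0 ^ a * w r0 with hMdef
  have hM : 0 < M := hpos1.trans_le (hmax r1 hr1)
  refine ⟨M, hM, ?_⟩
  set h : ℝ → ℝ := fun x => a * x * √(1 - (x / M) ^ (2 / a)) with hh
  have hcont : Continuous h := by
    have : Continuous fun x : ℝ => (x / M) ^ (2 / a) :=
      (continuous_id.div_const M).rpow_const (fun _ => Or.inr (by positivity))
    fun_prop
  set H : ℝ → ℝ := fun x => ∫ t in (0:ℝ)..x, h t with hHdef
  have hHder : ∀ x, HasDerivAt H (h x) x := fun x =>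
    intervalIntegral.integral_hasDerivAt_right (hcont.intervalIntegrable _ _)
      (hcont.stronglyMeasurableAtFilter _ _) hcont.continuousAt
  have hH0 : H 0 = 0 := by simp [hHdef]
  have hHM : 4 * H M = a * (√π * Gamma (a + 1) / Gamma (a + 3/2)) * M ^ 2 := by
    simp only [hHdef, hh]
    rw [rh_HM a M ha hM]; ring
  set φ : ℝ → ℝ := fun r => r ^ a * w r with hφdef
  set D : ℝ → ℝ := fun r => g r ^ 2 * r ^ (2 * a + 1) -
    a ^ 2 * M ^ (-(2 / a)) * (w r ^ ((2 * a + 2) / a) * r ^ (2 * a + 1)) with hD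
  have hDi : IntegrableOn D (Set.Ioi 0) := hE.sub (hQ.const_mul _)
  have hDint : ∫ r in Set.Ioi 0, D r = (∫ r in Set.Ioi 0, g r ^ 2 * r ^ (2 * a + 1)) -
      a ^ 2 * M ^ (-(2 / a)) *
        (∫ r in Set.Ioi 0, w r ^ ((2 * a + 2) / a) * r ^ (2 * a + 1)) := by
    rw [hD, integral_sub hE (hQ.const_mul _), integral_const_mul]
  have hseg : ∀ σ : ℝ, σ ^ 2 = 1 → ∀ x y, 0 < x → x ≤ y →
      (σ * 2 * H (φ y) - a * φ y ^ 2) - (σ * 2 * H (φ x) - a * φ x ^ 2) ≤ ∫ r in x..y, D r := by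
    intro σ hσ x y hx hxy
    have hd1 : ∀ r, 0 < r → HasDerivAt (fun r => σ * 2 * H (φ r) - a * φ r ^ 2)
        ((σ * 2 * h (φ r) - 2 * a * φ r) * (a * r ^ (a - 1) * w r + r ^ a * (-g r))) r := by
      intro r hr
      have h1 := (((hHder (φ r)).comp r (hder' r hr)).const_mul (σ * 2)).sub
        (((hder' r hr).pow 2).const_mul a)
      refine h1.congr_deriv ?_
      simp only [hφdef]; push_cast; ring
    refine intervalIntegral.sub_le_integral_of_hasDeriv_right_of_le
      (g := fun r => σ * 2 * H (φ r) - a * φ r ^ 2)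
      (g' := fun r => (σ * 2 * h (φ r) - 2 * a * φ r) * (a * r ^ (a - 1) * w r + r ^ a * (-g r)))
      hxy
      (fun r hr => (hd1 r (hx.trans_le hr.1)).continuousAt.continuousWithinAt)
      (fun r hr => (hd1 r (hx.trans hr.1)).hasDerivWithinAt)
      (hDi.mono_set fun r hr => hx.trans_le hr.1) ?_
    intro r hr
    have hr' : 0 < r := hx.trans hr.1
    exact rh_pt a M r (w r) (g r) σ ha hM hr' (hw0 r hr') hσ (hmax r hr')
  have hfin : 4 * H M ≤ ∫ r in Set.Ioi 0, D r := by
    set s : ℕ → Set ℝ := fun n => Set.Ioc (1 / ((n:ℝ) + 1)) ((n:ℝ) + 1) with hs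
    have hmono : Monotone s := by
      intro n m hnm
      have hc : (n:ℝ) ≤ m := by exact_mod_cast hnm
      refine Set.Ioc_subset_Ioc ?_ (by linarith)
      exact one_div_le_one_div_of_le (by positivity) (by linarith)
    have hlimn : Filter.Tendsto (fun n : ℕ => (n:ℝ) + 1) Filter.atTop Filter.atTop :=
      Filter.tendsto_atTop_add_const_right _ _ tendsto_natCast_atTop_atTop
    have hlim0 : Filter.Tendsto (fun n : ℕ => 1 / ((n:ℝ) + 1)) Filter.atTop
        (nhdsWithin 0 (Set.Ioi 0)) := by
      refine tendsto_nhdsWithin_iff.2 ⟨tendsto_one_div_add_atTop_nhds_zero_nat, ?_⟩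
      exact Filter.Eventually.of_forall fun n => by simp only [Set.mem_Ioi]; positivity
    have hU : ⋃ n, s n = Set.Ioi 0 := by
      ext r
      simp only [hs, Set.mem_iUnion, Set.mem_Ioc, Set.mem_Ioi]
      constructor
      · rintro ⟨n, h1, _⟩
        exact lt_trans (by positivity) h1
      · intro hr
        have e1 := (tendsto_one_div_add_atTop_nhds_zero_nat (𝕜 := ℝ)).eventually (gt_mem_nhds hr)
        exact (e1.and (hlimn.eventually_ge_atTop r)).exists
    have ht := tendsto_setIntegral_of_monotone (μ := volume) (f := D) (s := s)
      (fun n => measurableSet_Ioc) hmono (by rw [hU]; exact hDi)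
    rw [hU] at ht
    have hHc : Continuous H := continuous_iff_continuousAt.2 fun x => (hHder x).continuousAt
    have hrhs : Filter.Tendsto (fun n : ℕ => 4 * H M - (2 * H (φ (1 / ((n:ℝ) + 1))) -
          a * φ (1 / ((n:ℝ) + 1)) ^ 2) - (2 * H (φ ((n:ℝ) + 1)) + a * φ ((n:ℝ) + 1) ^ 2))
        Filter.atTop (nhds (4 * H M)) := by
      have t0 := hl0.comp hlim0
      have t1 := hl1.comp hlimn
      have u0 := (hHc.tendsto 0).comp t0
      have u1 := (hHc.tendsto 0).comp t1
      have := ((tendsto_const_nhds (x := 4 * H M)).sub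
        ((u0.const_mul 2).sub ((t0.pow 2).const_mul a))).sub
        ((u1.const_mul 2).add ((t1.pow 2).const_mul a))
      simpa [hH0] using this
    refine le_of_tendsto_of_tendsto hrhs ht ?_
    have ev1 := (tendsto_one_div_add_atTop_nhds_zero_nat (𝕜 := ℝ)).eventually (gt_mem_nhds hr0)
    filter_upwards [ev1, hlimn.eventually_ge_atTop r0] with n h1 h2
    have hx : (0:ℝ) < 1 / ((n:ℝ) + 1) := by positivity
    have s1 := hseg 1 (by norm_num) _ _ hx h1.le
    have s2 := hseg (-1) (by norm_num) _ _ hr0 h2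
    have hint : ∀ x y, 0 < x → x ≤ y → IntervalIntegrable D volume x y := fun x y hx hxy =>
      (intervalIntegrable_iff_integrableOn_Icc_of_le hxy).2
        (hDi.mono_set fun r hr => hx.trans_le hr.1)
    have hadd := intervalIntegral.integral_add_adjacent_intervals (hint _ _ hx h1.le)
      (hint _ _ hr0 h2)
    rw [← intervalIntegral.integral_of_le (h1.le.trans h2), ← hadd]
    have hφr0 : φ r0 = M := rfl
    rw [hφr0] at s1 s2
    linarith
  rw [hHM, hDint] at hfin
  linarith

lemma rh_sRad_nonneg (a : ℝ) (ha : 0 < a) : 0 ≤ sRad (2 * a + 2) := by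
  unfold sRad
  have h1 := Real.Gamma_pos_of_pos (show 0 < (2 * a + 2 + 1) / 2 by positivity)
  have h2 := Real.Gamma_pos_of_pos (show 0 < (2 * a + 2) / 2 by positivity)
  have : 0 < 2 * a + 2 - 2 := by linarith
  positivity

lemma rh_sobolev (a : ℝ) (ha : 0 < a) (w g : ℝ → ℝ) (hw0 : ∀ r, 0 < r → 0 ≤ w r)
    (hder : ∀ r, 0 < r → HasDerivAt w (-g r) r)
    (hl0 : Filter.Tendsto (fun r => r ^ a * w r) (nhdsWithin 0 (Set.Ioi 0)) (nhds 0))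
    (hl1 : Filter.Tendsto (fun r => r ^ a * w r) Filter.atTop (nhds 0))
    (hE : IntegrableOn (fun r => g r ^ 2 * r ^ (2 * a + 1)) (Set.Ioi 0))
    (hQ : IntegrableOn (fun r => w r ^ ((2 * a + 2) / a) * r ^ (2 * a + 1)) (Set.Ioi 0)) :
    (∫ r in Set.Ioi 0, w r ^ ((2 * a + 2) / a) * r ^ (2 * a + 1)) ^ (a / (a + 1)) ≤
      sRad (2 * a + 2) * ∫ r in Set.Ioi 0, g r ^ 2 * r ^ (2 * a + 1) := by
  have hE0 : 0 ≤ ∫ r in Set.Ioi 0, g r ^ 2 * r ^ (2 * a + 1) :=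
    setIntegral_nonneg measurableSet_Ioi fun r hr =>
      mul_nonneg (sq_nonneg _) (Real.rpow_nonneg (le_of_lt hr) _)
  have hQ0 : 0 ≤ ∫ r in Set.Ioi 0, w r ^ ((2 * a + 2) / a) * r ^ (2 * a + 1) :=
    setIntegral_nonneg measurableSet_Ioi fun r hr =>
      mul_nonneg (Real.rpow_nonneg (hw0 r hr) _) (Real.rpow_nonneg (le_of_lt hr) _)
  by_cases hne : ∃ r, 0 < r ∧ w r ≠ 0
  · obtain ⟨M, hM, hle⟩ := rh_calib a ha w g hw0 hder hl0 hl1 hE hQ hne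
    set Q := ∫ r in Set.Ioi 0, w r ^ ((2 * a + 2) / a) * r ^ (2 * a + 1)
    set E := ∫ r in Set.Ioi 0, g r ^ 2 * r ^ (2 * a + 1)
    have g1 := Real.Gamma_pos_of_pos (show 0 < a + 1 by positivity)
    have g2 := Real.Gamma_pos_of_pos (show 0 < a + 3/2 by positivity)
    have gp : 0 < √π := Real.sqrt_pos.2 Real.pi_pos
    have hs : sRad (2 * a + 2) = 1 / (a * (a + 1)) *
        ((√π * Gamma (a + 1) / Gamma (a + 3/2)) ^ (1 / (a + 1)))⁻¹ := by
      rw [sRad, show (2 * a + 2 + 1) / 2 = a + 3/2 by ring, show (2 * a + 2) / 2 = a + 1 by ring,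
        ← Real.inv_rpow (by positivity), inv_div, show 2 / (2 * a + 2) = 1 / (a + 1) by field_simp]
      congr 1
      rw [show 2 * a + 2 - 2 = 2 * a by ring]
      field_simp
      ring
    set γ := √π * Gamma (a + 1) / Gamma (a + 3/2) with hγ
    have hγ0 : 0 < γ := by positivity
    have amgm := Real.geom_mean_le_arith_mean2_weighted (w₁ := a / (a + 1)) (w₂ := 1 / (a + 1))
      (p₁ := a * (a + 1) * M ^ (-(2 / a)) * Q) (p₂ := a * (a + 1) * γ * M ^ 2)
      (by positivity) (by positivity) (by positivity) (by positivity) (by field_simp)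
    have e1 : a / (a + 1) * (a * (a + 1) * M ^ (-(2 / a)) * Q) +
        1 / (a + 1) * (a * (a + 1) * γ * M ^ 2) =
        a ^ 2 * M ^ (-(2 / a)) * Q + a * γ * M ^ 2 := by
      field_simp
    have e2 : (a * (a + 1) * M ^ (-(2 / a)) * Q) ^ (a / (a + 1)) *
        (a * (a + 1) * γ * M ^ 2) ^ (1 / (a + 1)) =
        a * (a + 1) * γ ^ (1 / (a + 1)) * Q ^ (a / (a + 1)) := by
      have haa : 0 < a * (a + 1) := by positivity
      rw [Real.mul_rpow (by positivity) hQ0,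
        Real.mul_rpow (x := a * (a + 1)) (y := M ^ (-(2 / a))) (by positivity) (by positivity),
        Real.mul_rpow (y := M ^ 2) (by positivity) (by positivity), Real.mul_rpow haa.le hγ0.le,
        ← Real.rpow_mul hM.le, ← Real.rpow_two, ← Real.rpow_mul hM.le]
      have t1 : (a * (a + 1)) ^ (a / (a + 1)) * (a * (a + 1)) ^ (1 / (a + 1)) = a * (a + 1) := by
        rw [← Real.rpow_add haa, show a / (a + 1) + 1 / (a + 1) = 1 by field_simp, Real.rpow_one]
      have t2 : M ^ (-(2 / a) * (a / (a + 1))) * M ^ (2 * (1 / (a + 1))) = 1 := by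
        rw [← Real.rpow_add hM, show -(2 / a) * (a / (a + 1)) + 2 * (1 / (a + 1)) = 0 by
          field_simp; ring, Real.rpow_zero]
      linear_combination (γ ^ (1 / (a + 1)) * Q ^ (a / (a + 1))) *
        (M ^ (-(2 / a) * (a / (a + 1))) * M ^ (2 * (1 / (a + 1)))) * t1 +
        (γ ^ (1 / (a + 1)) * Q ^ (a / (a + 1))) * (a * (a + 1)) * t2
    rw [e1, e2] at amgm
    have hfin := amgm.trans hle
    have hγ1 : 0 < γ ^ (1 / (a + 1)) := Real.rpow_pos_of_pos hγ0 _
    rw [hs]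
    set γ1 := γ ^ (1 / (a + 1))
    rw [show 1 / (a * (a + 1)) * γ1⁻¹ * E = E / (a * (a + 1) * γ1) by field_simp,
      le_div_iff₀ (by positivity)]
    linarith
  · push Not at hne
    have : ∫ r in Set.Ioi 0, w r ^ ((2 * a + 2) / a) * r ^ (2 * a + 1) = 0 := by
      refine setIntegral_eq_zero_of_forall_eq_zero fun r hr => ?_
      rw [hne r hr, Real.zero_rpow (by positivity), zero_mul]
    rw [this, Real.zero_rpow (by positivity)]
    exact mul_nonneg (rh_sRad_nonneg a ha) hE0

lemma rh_final_alg (a P Q E s : ℝ) (ha : 0 < a) (hP : 0 ≤ P) (hQ : 0 ≤ Q) (hE : 0 ≤ E)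
    (hs : 0 ≤ s) (h1 : E ≤ P ^ (1 / ((2 * a + 2) / (a + 2))) * Q ^ (1 / ((2 * a + 2) / a)))
    (h2 : Q ^ (a / (a + 1)) ≤ s * E) : E ≤ s * P ^ ((a + 2) / (a + 1)) := by
  have hP' : 0 ≤ P ^ ((a + 2) / (a + 1)) := Real.rpow_nonneg hP _
  rcases hE.eq_or_lt with h0 | h0
  · rw [← h0]; positivity
  have e1 : (P ^ (1 / ((2 * a + 2) / (a + 2)))) ^ 2 = P ^ ((a + 2) / (a + 1)) := by
    rw [← Real.rpow_natCast, ← Real.rpow_mul hP]; congr 1; push_cast; field_simp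
  have e2 : (Q ^ (1 / ((2 * a + 2) / a))) ^ 2 = Q ^ (a / (a + 1)) := by
    rw [← Real.rpow_natCast, ← Real.rpow_mul hQ]; congr 1; push_cast; field_simp
  have h3 := pow_le_pow_left₀ hE h1 2
  rw [mul_pow, e1, e2] at h3
  have h4 : E ^ 2 ≤ P ^ ((a + 2) / (a + 1)) * (s * E) :=
    h3.trans (mul_le_mul_of_nonneg_left h2 hP')
  refine le_of_mul_le_mul_right ?_ h0
  nlinarith

lemma rh_fubini (f g : ℝ → ℝ) (hf : IntegrableOn f (Set.Ioi 0)) (hg : IntegrableOn g (Set.Ioi 0)) :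
    ∫ r in Set.Ioi (0:ℝ), f r * ∫ s in Set.Ioi r, g s =
      ∫ s in Set.Ioi (0:ℝ), g s * ∫ r in Set.Ioo 0 s, f r := by
  have hprod : Integrable (fun p : ℝ × ℝ => f p.1 * g p.2)
      ((volume.restrict (Set.Ioi 0)).prod (volume.restrict (Set.Ioi 0))) := Integrable.mul_prod hf hg
  have hms : MeasurableSet {p : ℝ × ℝ | p.1 < p.2} := measurableSet_lt measurable_fst measurable_snd
  have hind := hprod.indicator hms
  have hswap := integral_integral_swap
    (f := fun r s => Set.indicator {p : ℝ × ℝ | p.1 < p.2} (fun p => f p.1 * g p.2) (r, s)) hind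
  have e1 : ∀ r ∈ Set.Ioi (0:ℝ), ∫ s in Set.Ioi (0:ℝ),
      Set.indicator {p : ℝ × ℝ | p.1 < p.2} (fun p => f p.1 * g p.2) (r, s) =
      f r * ∫ s in Set.Ioi r, g s := by
    intro r hr
    have hr : 0 < r := hr
    have : (fun s => Set.indicator {p : ℝ × ℝ | p.1 < p.2} (fun p => f p.1 * g p.2) (r, s)) =
        (Set.Ioi r).indicator (fun s => f r * g s) := by
      ext s; simp [Set.indicator_apply]
    rw [this, setIntegral_indicator measurableSet_Ioi, integral_const_mul]
    congr 3
    ext s; simp only [Set.mem_inter_iff, Set.mem_Ioi]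
    exact ⟨fun h => h.2, fun h => ⟨hr.trans h, h⟩⟩
  have e2 : ∀ s ∈ Set.Ioi (0:ℝ), ∫ r in Set.Ioi (0:ℝ),
      Set.indicator {p : ℝ × ℝ | p.1 < p.2} (fun p => f p.1 * g p.2) (r, s) =
      g s * ∫ r in Set.Ioo 0 s, f r := by
    intro s hs
    have : (fun r => Set.indicator {p : ℝ × ℝ | p.1 < p.2} (fun p => f p.1 * g p.2) (r, s)) =
        (Set.Iio s).indicator (fun r => g s * f r) := by
      ext r; simp [Set.indicator_apply, mul_comm]
    rw [this, setIntegral_indicator measurableSet_Iio, integral_const_mul, Set.Ioi_inter_Iio]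
  rw [← setIntegral_congr_fun measurableSet_Ioi e1, ← setIntegral_congr_fun measurableSet_Ioi e2]
  exact hswap

set_option maxHeartbeats 2000000 in
lemma rh_nice (a : ℝ) (ha : 0 < a) (v : ℝ → ℝ) (hm : AEStronglyMeasurable v volume)
    (hv0 : ∀ r, 0 ≤ v r) (N ε R : ℝ) (hb : ∀ r, v r ≤ N) (hε : 0 < ε)
    (hsupp : ∀ r, r ∉ Set.Icc ε R → v r = 0)
    (hP : IntegrableOn (fun r => v r ^ ((2 * a + 2) / (a + 2)) * r ^ (2 * a + 1)) (Set.Ioi 0)) :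
    (∫ r in Set.Ioi (0:ℝ), v r * radInvLap (2 * a + 2) v r * r ^ (2 * a + 1)) ≤
      sRad (2 * a + 2) * (∫ r in Set.Ioi (0:ℝ), v r ^ ((2 * a + 2) / (a + 2)) * r ^ (2 * a + 1)) ^
        ((a + 2) / (a + 1)) := by
  set f : ℝ → ℝ := fun t => v t * t ^ (2 * a + 1) with hfdef
  have hfm : AEStronglyMeasurable f volume :=
    hm.mul (measurable_id.pow_const (2 * a + 1)).aestronglyMeasurable
  have hf0 : ∀ t, 0 ≤ f t := by
    intro t
    by_cases ht : t ∈ Set.Icc ε R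
    · exact mul_nonneg (hv0 t) (Real.rpow_nonneg (hε.le.trans ht.1) _)
    · simp [hfdef, hsupp t ht]
  have hfi : Integrable f := by
    have hsub : Function.support f ⊆ Set.Icc ε R := by
      intro t ht
      by_contra hn
      exact ht (by simp [hfdef, hsupp t hn])
    rw [← integrableOn_iff_integrable_of_support_subset hsub]
    refine Measure.integrableOn_of_bounded (M := N * R ^ (2 * a + 1)) (by simp) hfm ?_
    refine (ae_restrict_iff' measurableSet_Icc).2 (Filter.Eventually.of_forall fun t ht => ?_)
    rw [Real.norm_of_nonneg (hf0 t)]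
    have ht0 : 0 ≤ t := hε.le.trans ht.1
    exact mul_le_mul (hb t) (Real.rpow_le_rpow ht0 ht.2 (by positivity)) (Real.rpow_nonneg ht0 _)
      ((hv0 t).trans (hb t))
  set F : ℝ → ℝ := fun s => ∫ t in Set.Ioo (0:ℝ) s, f t with hFdef
  set A := ∫ t, f t with hA
  have hF0 : ∀ s, 0 ≤ F s := fun s => setIntegral_nonneg measurableSet_Ioo fun t _ => hf0 t
  have hFA : ∀ s, F s ≤ A := fun s =>
    setIntegral_le_integral hfi (Filter.Eventually.of_forall hf0)
  have hA0 : 0 ≤ A := (hF0 0).trans (hFA 0)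
  have hFε : ∀ s, s ≤ ε → F s = 0 := fun s hs =>
    setIntegral_eq_zero_of_forall_eq_zero fun t ht => by
      have : t ∉ Set.Icc ε R := fun h => absurd (ht.2.trans_le hs) (not_lt.2 h.1)
      simp [hfdef, hsupp t this]
  have hFc : ∀ s, 0 < s → ContinuousAt F s := by
    intro s hs
    have hc : Continuous fun x => ∫ t in (0:ℝ)..x, f t :=
      intervalIntegral.continuous_primitive (fun _ _ => hfi.intervalIntegrable) 0
    refine hc.continuousAt.congr ?_
    filter_upwards [lt_mem_nhds hs] with x hx
    rw [intervalIntegral.integral_of_le hx.le, integral_Ioc_eq_integral_Ioo]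
  set g : ℝ → ℝ := fun s => s ^ (-(2 * a + 1)) * F s with hgdef
  have hg0 : ∀ s, 0 < s → 0 ≤ g s := fun s hs => mul_nonneg (Real.rpow_nonneg hs.le _) (hF0 s)
  have hgA : ∀ s, 0 < s → g s ≤ A * s ^ (-(2 * a + 1)) := fun s hs => by
    rw [mul_comm A]
    exact mul_le_mul_of_nonneg_left (hFA s) (Real.rpow_nonneg hs.le _)
  have hgc : ∀ s, 0 < s → ContinuousAt g s := fun s hs =>
    (Real.continuousAt_rpow_const _ _ (Or.inl hs.ne')).mul (hFc s hs)
  have hgm : ∀ x, 0 ≤ x → AEStronglyMeasurable g (volume.restrict (Set.Ioi x)) := fun x hx =>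
    ContinuousOn.aestronglyMeasurable
      (fun s hs => (hgc s (lt_of_le_of_lt hx hs)).continuousWithinAt) measurableSet_Ioi
  have hpow : ∀ x : ℝ, 0 < x → IntegrableOn (fun s => A * s ^ (-(2 * a + 1))) (Set.Ioi x) :=
    fun x hx => (integrableOn_Ioi_rpow_of_lt (by linarith) hx).const_mul A
  have hgi1 : ∀ x : ℝ, 0 < x → IntegrableOn g (Set.Ioi x) := by
    intro x hx
    refine Integrable.mono' (hpow x hx) (hgm x hx.le) ?_
    refine (ae_restrict_iff' measurableSet_Ioi).2 (Filter.Eventually.of_forall fun s hs => ?_)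
    have hs : 0 < s := hx.trans hs
    rw [Real.norm_of_nonneg (hg0 s hs)]
    exact hgA s hs
  have hgi : IntegrableOn g (Set.Ioi 0) := by
    rw [← Set.Ioc_union_Ioi_eq_Ioi hε.le]
    refine IntegrableOn.union ?_ (hgi1 ε hε)
    refine integrableOn_zero.congr_fun (fun s hs => ?_) measurableSet_Ioc
    simp [hgdef, hFε s hs.2]
  set w : ℝ → ℝ := fun r => ∫ s in Set.Ioi r, g s with hwdef
  have hwrad : ∀ r, radInvLap (2 * a + 2) v r = w r := by
    intro r
    simp only [radInvLap, hwdef, hgdef, hFdef, hfdef]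
    rw [show 1 - (2 * a + 2) = -(2 * a + 1) by ring, show 2 * a + 2 - 1 = 2 * a + 1 by ring]
  have hw0 : ∀ r, 0 < r → 0 ≤ w r := fun r hr =>
    setIntegral_nonneg measurableSet_Ioi fun s hs => hg0 s (hr.trans hs)
  set W := ∫ s in Set.Ioi 0, g s with hW
  have hwW : ∀ r, 0 < r → w r ≤ W := fun r hr =>
    setIntegral_mono_set hgi
      ((ae_restrict_iff' measurableSet_Ioi).2 (Filter.Eventually.of_forall fun s hs => hg0 s hs))
      (Filter.Eventually.of_forall fun s hs => hr.trans hs)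
  have hwA : ∀ r, 0 < r → w r ≤ A / (2 * a) * r ^ (-(2 * a)) := by
    intro r hr
    have h1 : w r ≤ ∫ s in Set.Ioi r, A * s ^ (-(2 * a + 1)) :=
      setIntegral_mono_on (hgi1 r hr) (hpow r hr) measurableSet_Ioi
        fun s hs => hgA s (hr.trans hs)
    rw [integral_const_mul, integral_Ioi_rpow_of_lt (by linarith) hr,
      show -(2 * a + 1) + 1 = -(2 * a) by ring] at h1
    refine h1.trans (le_of_eq ?_)
    field_simp
  have hder : ∀ r, 0 < r → HasDerivAt w (-g r) r := by
    intro r hr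
    have hii : IntervalIntegrable g volume 0 r :=
      (intervalIntegrable_iff_integrableOn_Ioc_of_le hr.le).2
        (hgi.mono_set fun s hs => hs.1)
    have hsm : StronglyMeasurableAtFilter g (nhds r) volume :=
      ⟨Set.Ioi 0, Ioi_mem_nhds hr, hgm 0 le_rfl⟩
    have h1 := (intervalIntegral.integral_hasDerivAt_right hii hsm (hgc r hr)).const_sub W
    refine h1.congr_of_eventuallyEq ?_
    filter_upwards [lt_mem_nhds hr] with x hx
    have hu := setIntegral_union (Set.Ioc_disjoint_Ioi_same (a := (0:ℝ)) (b := x)) measurableSet_Ioi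
      (hgi.mono_set fun s hs => hs.1) (hgi1 x hx)
    rw [Set.Ioc_union_Ioi_eq_Ioi hx.le] at hu
    rw [intervalIntegral.integral_of_le hx.le]
    simp only [hwdef, hW]
    linarith
  have hwc : ContinuousOn w (Set.Ioi 0) := fun r hr => (hder r hr).continuousAt.continuousWithinAt
  have hl0 : Filter.Tendsto (fun r => r ^ a * w r) (nhdsWithin 0 (Set.Ioi 0)) (nhds 0) := by
    have t : Filter.Tendsto (fun r : ℝ => r ^ a * W) (nhdsWithin 0 (Set.Ioi 0)) (nhds 0) := by
      have := ((Real.continuousAt_rpow_const (0:ℝ) a (Or.inr ha.le)).tendsto.mono_left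
        (nhdsWithin_le_nhds (s := Set.Ioi 0))).mul_const W
      simpa [Real.zero_rpow ha.ne'] using this
    refine tendsto_of_tendsto_of_tendsto_of_le_of_le' tendsto_const_nhds t ?_ ?_
    · filter_upwards [self_mem_nhdsWithin] with r hr
      exact mul_nonneg (Real.rpow_nonneg (le_of_lt hr) _) (hw0 r hr)
    · filter_upwards [self_mem_nhdsWithin] with r hr
      exact mul_le_mul_of_nonneg_left (hwW r hr) (Real.rpow_nonneg (le_of_lt hr) _)
  have hl1 : Filter.Tendsto (fun r => r ^ a * w r) Filter.atTop (nhds 0) := by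
    have t : Filter.Tendsto (fun r : ℝ => A / (2 * a) * r ^ (-a)) Filter.atTop (nhds 0) := by
      have := (tendsto_rpow_neg_atTop ha).const_mul (A / (2 * a))
      simpa using this
    refine tendsto_of_tendsto_of_tendsto_of_le_of_le' tendsto_const_nhds t ?_ ?_
    · filter_upwards [Filter.eventually_gt_atTop 0] with r hr
      exact mul_nonneg (Real.rpow_nonneg (le_of_lt hr) _) (hw0 r hr)
    · filter_upwards [Filter.eventually_gt_atTop 0] with r hr
      refine (mul_le_mul_of_nonneg_left (hwA r hr) (Real.rpow_nonneg (le_of_lt hr) _)).trans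
        (le_of_eq ?_)
      rw [show -a = a + -(2 * a) by ring, Real.rpow_add hr]; ring
  have hgF : ∀ r ∈ Set.Ioi (0:ℝ), g r * F r = g r ^ 2 * r ^ (2 * a + 1) := by
    intro r hr
    have hr : 0 < r := hr
    have : r ^ (-(2 * a + 1)) * r ^ (2 * a + 1) = 1 := by
      rw [← Real.rpow_add hr]; simp
    simp only [hgdef]
    linear_combination (-(r ^ (-(2 * a + 1)) * F r ^ 2)) * this
  have hE : IntegrableOn (fun r => g r ^ 2 * r ^ (2 * a + 1)) (Set.Ioi 0) := by
    refine IntegrableOn.congr_fun ?_ hgF measurableSet_Ioi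
    refine Integrable.mono' (hgi.mul_const A)
      ((hgm 0 le_rfl).mul (ContinuousOn.aestronglyMeasurable
        (fun s hs => (hFc s hs).continuousWithinAt) measurableSet_Ioi)) ?_
    refine (ae_restrict_iff' measurableSet_Ioi).2 (Filter.Eventually.of_forall fun s hs => ?_)
    rw [Real.norm_of_nonneg (mul_nonneg (hg0 s hs) (hF0 s))]
    exact mul_le_mul_of_nonneg_left (hFA s) (hg0 s hs)
  have hrc : ∀ c : ℝ, ContinuousOn (fun r : ℝ => r ^ c) (Set.Ioi 0) := fun c r hr =>
    (Real.continuousAt_rpow_const r c (Or.inl (ne_of_gt hr))).continuousWithinAt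
  have hq0 : 0 < (2 * a + 2) / a := by positivity
  have hQm : ContinuousOn (fun r => w r ^ ((2 * a + 2) / a) * r ^ (2 * a + 1)) (Set.Ioi 0) :=
    (hwc.rpow_const fun _ _ => Or.inr hq0.le).mul (hrc _)
  have hQ : IntegrableOn (fun r => w r ^ ((2 * a + 2) / a) * r ^ (2 * a + 1)) (Set.Ioi 0) := by
    rw [← Set.Ioc_union_Ioi_eq_Ioi (zero_le_one' ℝ)]
    refine IntegrableOn.union ?_ ?_
    · refine Integrable.mono' (g := fun _ => W ^ ((2 * a + 2) / a))
        (integrableOn_const (by simp))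
        ((hQm.mono fun r hr => hr.1).aestronglyMeasurable measurableSet_Ioc) ?_
      refine (ae_restrict_iff' measurableSet_Ioc).2 (Filter.Eventually.of_forall fun r hr => ?_)
      have hr0 : 0 < r := hr.1
      have p1 := Real.rpow_nonneg (hw0 r hr0) ((2 * a + 2) / a)
      have p2 := Real.rpow_nonneg hr0.le (2 * a + 1)
      rw [Real.norm_of_nonneg (mul_nonneg p1 p2)]
      have q1 := Real.rpow_le_rpow (hw0 r hr0) (hwW r hr0) hq0.le
      have q2 := Real.rpow_le_one hr0.le hr.2 (show 0 ≤ 2 * a + 1 by positivity)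
      nlinarith
    · refine Integrable.mono' (g := fun r => (A / (2 * a)) ^ ((2 * a + 2) / a) * r ^ (-(2 * a + 3)))
        ((integrableOn_Ioi_rpow_of_lt (by linarith) one_pos).const_mul _)
        ((hQm.mono (Set.Ioi_subset_Ioi zero_le_one)).aestronglyMeasurable measurableSet_Ioi) ?_
      refine (ae_restrict_iff' measurableSet_Ioi).2 (Filter.Eventually.of_forall fun r hr => ?_)
      have hr0 : 0 < r := lt_trans one_pos hr
      have p1 := Real.rpow_nonneg (hw0 r hr0) ((2 * a + 2) / a)
      have p2 := Real.rpow_nonneg hr0.le (2 * a + 1)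
      rw [Real.norm_of_nonneg (mul_nonneg p1 p2)]
      have q1 := Real.rpow_le_rpow (hw0 r hr0) (hwA r hr0) hq0.le
      refine (mul_le_mul_of_nonneg_right q1 p2).trans (le_of_eq ?_)
      rw [Real.mul_rpow (by positivity) (by positivity), ← Real.rpow_mul hr0.le, mul_assoc,
        ← Real.rpow_add hr0]
      congr 2
      field_simp
      ring
  have hsob := rh_sobolev a ha w g hw0 hder hl0 hl1 hE hQ
  have hEeq : ∫ r in Set.Ioi (0:ℝ), v r * radInvLap (2 * a + 2) v r * r ^ (2 * a + 1) =
      ∫ r in Set.Ioi 0, g r ^ 2 * r ^ (2 * a + 1) := by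
    rw [← setIntegral_congr_fun measurableSet_Ioi hgF]
    rw [← rh_fubini f g hfi.integrableOn hgi]
    refine integral_congr_ae (Filter.Eventually.of_forall fun r => ?_)
    simp only [hwrad, hfdef, hwdef]
    ring
  have hp0 : 0 < (2 * a + 2) / (a + 2) := by positivity
  have hhol : ((2 * a + 2) / (a + 2)).HolderConjugate ((2 * a + 2) / a) := by
    rw [Real.holderConjugate_iff]
    constructor
    · rw [one_lt_div (by positivity)]; linarith
    · field_simp; ring
  have hpow1 : ∀ r ∈ Set.Ioi (0:ℝ), (v r * r ^ ((2 * a + 1) / ((2 * a + 2) / (a + 2)))) ^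
      ((2 * a + 2) / (a + 2)) = v r ^ ((2 * a + 2) / (a + 2)) * r ^ (2 * a + 1) := by
    intro r hr
    have hr : 0 < r := hr
    rw [Real.mul_rpow (hv0 r) (by positivity), ← Real.rpow_mul hr.le, div_mul_cancel₀ _ hp0.ne']
  have hpow2 : ∀ r ∈ Set.Ioi (0:ℝ), (w r * r ^ ((2 * a + 1) / ((2 * a + 2) / a))) ^
      ((2 * a + 2) / a) = w r ^ ((2 * a + 2) / a) * r ^ (2 * a + 1) := by
    intro r hr
    have hr : 0 < r := hr
    rw [Real.mul_rpow (hw0 r hr) (by positivity), ← Real.rpow_mul hr.le, div_mul_cancel₀ _ hq0.ne']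
  have hn1 : ∀ r ∈ Set.Ioi (0:ℝ), 0 ≤ v r * r ^ ((2 * a + 1) / ((2 * a + 2) / (a + 2))) :=
    fun r hr => mul_nonneg (hv0 r) (Real.rpow_nonneg (le_of_lt hr) _)
  have hn2 : ∀ r ∈ Set.Ioi (0:ℝ), 0 ≤ w r * r ^ ((2 * a + 1) / ((2 * a + 2) / a)) :=
    fun r hr => mul_nonneg (hw0 r hr) (Real.rpow_nonneg (le_of_lt hr) _)
  have hH : ∫ r in Set.Ioi (0:ℝ), v r * radInvLap (2 * a + 2) v r * r ^ (2 * a + 1) ≤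
      (∫ r in Set.Ioi (0:ℝ), v r ^ ((2 * a + 2) / (a + 2)) * r ^ (2 * a + 1)) ^
        (1 / ((2 * a + 2) / (a + 2))) *
      (∫ r in Set.Ioi (0:ℝ), w r ^ ((2 * a + 2) / a) * r ^ (2 * a + 1)) ^
        (1 / ((2 * a + 2) / a)) := by
    have hol := integral_mul_le_Lp_mul_Lq_of_nonneg (μ := volume.restrict (Set.Ioi (0:ℝ))) hhol
      (f := fun r => v r * r ^ ((2 * a + 1) / ((2 * a + 2) / (a + 2))))
      (g := fun r => w r * r ^ ((2 * a + 1) / ((2 * a + 2) / a)))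
      ((ae_restrict_iff' measurableSet_Ioi).2 (Filter.Eventually.of_forall hn1))
      ((ae_restrict_iff' measurableSet_Ioi).2 (Filter.Eventually.of_forall hn2)) ?_ ?_
    · rw [setIntegral_congr_fun measurableSet_Ioi hpow1,
        setIntegral_congr_fun measurableSet_Ioi hpow2] at hol
      refine le_trans (le_of_eq ?_) hol
      refine setIntegral_congr_fun measurableSet_Ioi fun r hr => ?_
      have hr : 0 < r := hr
      simp only [hwrad]
      have : r ^ (2 * a + 1) = r ^ ((2 * a + 1) / ((2 * a + 2) / (a + 2))) *
          r ^ ((2 * a + 1) / ((2 * a + 2) / a)) := by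
        rw [← Real.rpow_add hr]; congr 1; field_simp; ring
      rw [this]; ring
    · rw [← integrable_norm_rpow_iff]
      · refine IntegrableOn.congr_fun hP (fun r hr => ?_) measurableSet_Ioi
        rw [ENNReal.toReal_ofReal hp0.le, Real.norm_of_nonneg (hn1 r hr), hpow1 r hr]
      · exact hm.restrict.mul (measurable_id.pow_const _).aestronglyMeasurable
      · simpa using hp0
      · simp
    · rw [← integrable_norm_rpow_iff]
      · refine IntegrableOn.congr_fun hQ (fun r hr => ?_) measurableSet_Ioi
        rw [ENNReal.toReal_ofReal hq0.le, Real.norm_of_nonneg (hn2 r hr), hpow2 r hr]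
      · exact (hwc.mul (hrc _)).aestronglyMeasurable measurableSet_Ioi
      · simpa using hq0
      · simp
  have hP0 : 0 ≤ ∫ r in Set.Ioi (0:ℝ), v r ^ ((2 * a + 2) / (a + 2)) * r ^ (2 * a + 1) :=
    setIntegral_nonneg measurableSet_Ioi fun r hr =>
      mul_nonneg (Real.rpow_nonneg (hv0 r) _) (Real.rpow_nonneg (le_of_lt hr) _)
  have hQ0 : 0 ≤ ∫ r in Set.Ioi 0, w r ^ ((2 * a + 2) / a) * r ^ (2 * a + 1) :=
    setIntegral_nonneg measurableSet_Ioi fun r hr =>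
      mul_nonneg (Real.rpow_nonneg (hw0 r hr) _) (Real.rpow_nonneg (le_of_lt hr) _)
  have hE0 : 0 ≤ ∫ r in Set.Ioi 0, g r ^ 2 * r ^ (2 * a + 1) :=
    setIntegral_nonneg measurableSet_Ioi fun r hr =>
      mul_nonneg (sq_nonneg _) (Real.rpow_nonneg (le_of_lt hr) _)
  rw [hEeq] at hH ⊢
  exact rh_final_alg a _ _ _ _ ha hP0 hQ0 hE0 (rh_sRad_nonneg a ha) hH hsob

lemma rh_rad (a : ℝ) (u : ℝ → ℝ) (r : ℝ) : radInvLap (2 * a + 2) u r =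
    ∫ s in Set.Ioi r, s ^ (-(2 * a + 1)) * ∫ t in Set.Ioo (0:ℝ) s, u t * t ^ (2 * a + 1) := by
  rw [radInvLap, show 1 - (2 * a + 2) = -(2 * a + 1) by ring,
    show 2 * a + 2 - 1 = 2 * a + 1 by ring]

lemma rh_young (p x μ : ℝ) (hp : 1 ≤ p) (hx : 0 ≤ x) (hμ : 0 < μ) :
    x ≤ μ ^ (1 - p) * x ^ p + μ := by
  have h1 : x / μ ≤ (x / μ) ^ p + 1 := by
    rcases le_total (x / μ) 1 with h | h
    · have : 0 ≤ (x / μ) ^ p := by positivity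
      linarith
    · have := Real.rpow_le_rpow_of_exponent_le h hp
      rw [Real.rpow_one] at this
      linarith
  have h2 := mul_le_mul_of_nonneg_left h1 hμ.le
  rw [mul_div_cancel₀ _ hμ.ne'] at h2
  refine h2.trans (le_of_eq ?_)
  rw [Real.rpow_sub hμ, Real.rpow_one, Real.div_rpow hx hμ.le]
  ring

lemma rh_basic (a : ℝ) (ha : 0 < a) (u : ℝ → ℝ)
    (hm : AEStronglyMeasurable u (volume.restrict (Set.Ioi 0)))
    (hu0 : ∀ r, 0 < r → 0 ≤ u r)
    (hP : IntegrableOn (fun r => u r ^ ((2 * a + 2) / (a + 2)) * r ^ (2 * a + 1)) (Set.Ioi 0)) :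
    (∀ s, IntegrableOn (fun t => u t * t ^ (2 * a + 1)) (Set.Ioo 0 s)) ∧
    (Monotone fun s => ∫ t in Set.Ioo (0:ℝ) s, u t * t ^ (2 * a + 1)) ∧
    (∀ r, 0 < r → IntegrableOn
      (fun s => s ^ (-(2 * a + 1)) * ∫ t in Set.Ioo (0:ℝ) s, u t * t ^ (2 * a + 1))
      (Set.Ioi r)) := by
  have hp1 : 1 ≤ (2 * a + 2) / (a + 2) := by
    rw [one_le_div (by positivity)]; linarith
  have hc : -1 < 2 * a + 1 := by linarith
  have hpi : ∀ s : ℝ, 0 < s → IntegrableOn (fun t : ℝ => t ^ (2 * a + 1)) (Set.Ioo 0 s) :=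
    fun s hs => (intervalIntegral.integrableOn_Ioo_rpow_iff hs).2 hc
  have hPs : ∀ s, IntegrableOn (fun r => u r ^ ((2 * a + 2) / (a + 2)) * r ^ (2 * a + 1))
      (Set.Ioo 0 s) := fun s => hP.mono_set fun t ht => ht.1
  have hbd : ∀ μ t, 0 < μ → 0 < t → u t * t ^ (2 * a + 1) ≤
      μ ^ (1 - (2 * a + 2) / (a + 2)) * (u t ^ ((2 * a + 2) / (a + 2)) * t ^ (2 * a + 1)) +
        μ * t ^ (2 * a + 1) := by
    intro μ t hμ ht
    have h1 := rh_young _ (u t) μ hp1 (hu0 t ht) hμ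
    have h2 := mul_le_mul_of_nonneg_right h1 (Real.rpow_nonneg ht.le (2 * a + 1))
    linarith
  have i1 : ∀ s, IntegrableOn (fun t => u t * t ^ (2 * a + 1)) (Set.Ioo 0 s) := by
    intro s
    rcases le_or_gt s 0 with hs | hs
    · rw [Set.Ioo_eq_empty (not_lt.2 hs)]; exact integrableOn_empty
    refine Integrable.mono' (((hPs s).const_mul ((1:ℝ) ^ (1 - (2 * a + 2) / (a + 2)))).add
      ((hpi s hs).const_mul 1)) ?_ ?_
    · exact (hm.mono_measure (Measure.restrict_mono (fun t ht => ht.1) le_rfl)).mul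
        (measurable_id.pow_const _).aestronglyMeasurable
    · refine (ae_restrict_iff' measurableSet_Ioo).2 (Filter.Eventually.of_forall fun t ht => ?_)
      rw [Real.norm_of_nonneg (mul_nonneg (hu0 t ht.1) (Real.rpow_nonneg ht.1.le _))]
      exact hbd 1 t one_pos ht.1
  have hf0 : ∀ s, ∀ t ∈ Set.Ioo (0:ℝ) s, 0 ≤ u t * t ^ (2 * a + 1) := fun s t ht =>
    mul_nonneg (hu0 t ht.1) (Real.rpow_nonneg ht.1.le _)
  have hmono : Monotone fun s => ∫ t in Set.Ioo (0:ℝ) s, u t * t ^ (2 * a + 1) := by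
    intro s s' hss
    exact setIntegral_mono_set (i1 s')
      ((ae_restrict_iff' measurableSet_Ioo).2 (Filter.Eventually.of_forall (hf0 s')))
      (Filter.Eventually.of_forall fun t ht => ⟨ht.1, ht.2.trans_le hss⟩)
  refine ⟨i1, hmono, fun r hr => ?_⟩
  set P := ∫ r in Set.Ioi (0:ℝ), u r ^ ((2 * a + 2) / (a + 2)) * r ^ (2 * a + 1) with hPdef
  refine Integrable.mono' (g := fun s => (P + 1 / (2 * a + 2)) * s ^ (-(a + 1)))
    ((integrableOn_Ioi_rpow_of_lt (by linarith) hr).const_mul _)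
    ((measurable_id.pow_const _).mul hmono.measurable).aestronglyMeasurable ?_
  refine (ae_restrict_iff' measurableSet_Ioi).2 (Filter.Eventually.of_forall fun s hs => ?_)
  have hs : 0 < s := hr.trans hs
  have hsc := Real.rpow_nonneg hs.le (-(2 * a + 1))
  rw [Real.norm_of_nonneg (mul_nonneg hsc (setIntegral_nonneg measurableSet_Ioo (hf0 s)))]
  set μ := s ^ (-(a + 2)) with hμdef
  have hμ : 0 < μ := Real.rpow_pos_of_pos hs _
  have hle : ∫ t in Set.Ioo (0:ℝ) s, u t * t ^ (2 * a + 1) ≤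
      μ ^ (1 - (2 * a + 2) / (a + 2)) * P + μ * (s ^ (2 * a + 2) / (2 * a + 2)) := by
    have h1 := setIntegral_mono_on (i1 s)
      (((hPs s).const_mul (μ ^ (1 - (2 * a + 2) / (a + 2)))).add ((hpi s hs).const_mul μ))
      measurableSet_Ioo (fun t ht => hbd μ t hμ ht.1)
    refine h1.trans ?_
    have h2 := integral_add ((hPs s).const_mul (μ ^ (1 - (2 * a + 2) / (a + 2))))
      ((hpi s hs).const_mul μ)
    simp only [Pi.add_apply]
    rw [h2, integral_const_mul, integral_const_mul]
    have h3 : ∫ t in Set.Ioo (0:ℝ) s, t ^ (2 * a + 1) = s ^ (2 * a + 2) / (2 * a + 2) := by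
      rw [← integral_Ioc_eq_integral_Ioo, ← intervalIntegral.integral_of_le hs.le,
        integral_rpow (Or.inl hc), Real.zero_rpow (by linarith), sub_zero,
        show 2 * a + 1 + 1 = 2 * a + 2 by ring]
    rw [h3]
    have h4 : ∫ t in Set.Ioo (0:ℝ) s, u t ^ ((2 * a + 2) / (a + 2)) * t ^ (2 * a + 1) ≤ P :=
      setIntegral_mono_set hP ((ae_restrict_iff' measurableSet_Ioi).2
        (Filter.Eventually.of_forall fun t ht => mul_nonneg (Real.rpow_nonneg (hu0 t ht) _)
          (Real.rpow_nonneg (le_of_lt ht) _)))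
        (Filter.Eventually.of_forall fun t ht => ht.1)
    have h5 := mul_le_mul_of_nonneg_left h4
      (Real.rpow_nonneg hμ.le (1 - (2 * a + 2) / (a + 2)))
    linarith
  refine (mul_le_mul_of_nonneg_left hle hsc).trans (le_of_eq ?_)
  have e1 : s ^ (-(2 * a + 1)) * μ ^ (1 - (2 * a + 2) / (a + 2)) = s ^ (-(a + 1)) := by
    rw [hμdef, ← Real.rpow_mul hs.le, ← Real.rpow_add hs]
    congr 1
    field_simp
    ring
  have e2 : s ^ (-(2 * a + 1)) * μ * s ^ (2 * a + 2) = s ^ (-(a + 1)) := by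
    rw [hμdef, ← Real.rpow_add hs, ← Real.rpow_add hs]
    congr 1
    ring
  linear_combination P * e1 + (1 / (2 * a + 2)) * e2

lemma rh_main (a : ℝ) (ha : 0 < a) (v : ℝ → ℝ)
    (hv0 : ∀ r, 0 < r → 0 ≤ v r)
    (hP : IntegrableOn (fun r => v r ^ ((2 * a + 2) / (a + 2)) * r ^ (2 * a + 1)) (Set.Ioi 0)) :
    (∫ r in Set.Ioi (0:ℝ), v r * radInvLap (2 * a + 2) v r * r ^ (2 * a + 1)) ≤
      sRad (2 * a + 2) * (∫ r in Set.Ioi (0:ℝ), v r ^ ((2 * a + 2) / (a + 2)) * r ^ (2 * a + 1)) ^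
        ((a + 2) / (a + 1)) := by
  have hp0 : 0 < (2 * a + 2) / (a + 2) := by positivity
  have hP0 : 0 ≤ ∫ r in Set.Ioi (0:ℝ), v r ^ ((2 * a + 2) / (a + 2)) * r ^ (2 * a + 1) :=
    setIntegral_nonneg measurableSet_Ioi fun r hr =>
      mul_nonneg (Real.rpow_nonneg (hv0 r hr) _) (Real.rpow_nonneg (le_of_lt hr) _)
  by_cases hint : IntegrableOn (fun r => v r * radInvLap (2 * a + 2) v r * r ^ (2 * a + 1))
      (Set.Ioi 0)
  swap
  · rw [integral_undef hint]
    exact mul_nonneg (rh_sRad_nonneg a ha) (Real.rpow_nonneg hP0 _)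
  have hvm : AEStronglyMeasurable v (volume.restrict (Set.Ioi 0)) := by
    have h1 : AEMeasurable (fun r => (v r ^ ((2 * a + 2) / (a + 2)) * r ^ (2 * a + 1) *
        r ^ (-(2 * a + 1))) ^ ((2 * a + 2) / (a + 2))⁻¹) (volume.restrict (Set.Ioi 0)) :=
      (hP.aestronglyMeasurable.aemeasurable.mul
        (measurable_id.pow_const _).aemeasurable).pow_const _
    refine h1.aestronglyMeasurable.congr ?_
    refine (ae_restrict_iff' measurableSet_Ioi).2 (Filter.Eventually.of_forall fun r hr => ?_)
    have hr : 0 < r := hr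
    simp only
    rw [mul_assoc, ← Real.rpow_add hr, add_neg_cancel, Real.rpow_zero, mul_one,
      Real.rpow_rpow_inv (hv0 r hr) hp0.ne']
  obtain ⟨vi, vmono, vint⟩ := rh_basic a ha v hvm hv0 hP
  -- truncations
  set u : ℕ → ℝ → ℝ := fun n => (Set.Icc (1 / ((n:ℝ) + 1)) ((n:ℝ) + 1)).indicator
    (fun r => min (v r) n) with hu
  have hIpos : ∀ n : ℕ, ∀ r ∈ Set.Icc (1 / ((n:ℝ) + 1)) ((n:ℝ) + 1), 0 < r := fun n r hr =>
    lt_of_lt_of_le (by positivity) hr.1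
  have hum : ∀ n, AEStronglyMeasurable (u n) volume := by
    intro n
    refine (aestronglyMeasurable_indicator_iff measurableSet_Icc).2 ?_
    exact ((hvm.mono_measure (Measure.restrict_mono (hIpos n) le_rfl)).aemeasurable.min
      aemeasurable_const).aestronglyMeasurable
  have hu0 : ∀ n r, 0 ≤ u n r := fun n r =>
    Set.indicator_nonneg (fun r hr => le_min (hv0 r (hIpos n r hr)) (Nat.cast_nonneg n)) r
  have hub : ∀ n r, u n r ≤ n := fun n r =>
    Set.indicator_apply_le' (fun _ => min_le_right _ _) (fun _ => Nat.cast_nonneg n)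
  have huv : ∀ n r, 0 < r → u n r ≤ v r := fun n r hr =>
    Set.indicator_apply_le' (fun _ => min_le_left _ _) (fun _ => hv0 r hr)
  have hulim : ∀ r, 0 < r → Filter.Tendsto (fun n => u n r) Filter.atTop (nhds (v r)) := by
    intro r hr
    refine tendsto_const_nhds.congr' ?_
    have hlimn : Filter.Tendsto (fun n : ℕ => (n:ℝ)) Filter.atTop Filter.atTop :=
      tendsto_natCast_atTop_atTop
    filter_upwards [(tendsto_one_div_add_atTop_nhds_zero_nat (𝕜 := ℝ)).eventually (gt_mem_nhds hr),
      hlimn.eventually_ge_atTop r, hlimn.eventually_ge_atTop (v r)] with n h1 h2 h3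
    simp only [hu]
    have hmem : r ∈ Set.Icc (1 / ((n:ℝ) + 1)) ((n:ℝ) + 1) := ⟨h1.le, by linarith⟩
    rw [Set.indicator_of_mem hmem, min_eq_left h3]
  have hPle : ∀ n, ∀ r ∈ Set.Ioi (0:ℝ), u n r ^ ((2 * a + 2) / (a + 2)) * r ^ (2 * a + 1) ≤
      v r ^ ((2 * a + 2) / (a + 2)) * r ^ (2 * a + 1) := fun n r hr =>
    mul_le_mul_of_nonneg_right (Real.rpow_le_rpow (hu0 n r) (huv n r hr) hp0.le)
      (Real.rpow_nonneg (le_of_lt hr) _)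
  have huP : ∀ n, IntegrableOn (fun r => u n r ^ ((2 * a + 2) / (a + 2)) * r ^ (2 * a + 1))
      (Set.Ioi 0) := by
    intro n
    refine Integrable.mono' hP ?_ ?_
    · exact (((hum n).restrict.aemeasurable.pow_const _).mul
        (measurable_id.pow_const _).aemeasurable).aestronglyMeasurable
    · refine (ae_restrict_iff' measurableSet_Ioi).2 (Filter.Eventually.of_forall fun r hr => ?_)
      rw [Real.norm_of_nonneg (mul_nonneg (Real.rpow_nonneg (hu0 n r) _)
        (Real.rpow_nonneg (le_of_lt hr) _))]
      exact hPle n r hr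
  have hub' := fun n => rh_basic a ha (u n) (hum n).restrict (fun r _ => hu0 n r) (huP n)
  -- each truncation satisfies the inequality
  have hn : ∀ n, (∫ r in Set.Ioi (0:ℝ), u n r * radInvLap (2 * a + 2) (u n) r * r ^ (2 * a + 1)) ≤
      sRad (2 * a + 2) * (∫ r in Set.Ioi (0:ℝ), v r ^ ((2 * a + 2) / (a + 2)) * r ^ (2 * a + 1)) ^
        ((a + 2) / (a + 1)) := by
    intro n
    refine (rh_nice a ha (u n) (hum n) (hu0 n) n (1 / ((n:ℝ) + 1)) ((n:ℝ) + 1) (hub n)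
      (by positivity) (fun r hr => Set.indicator_of_notMem hr _) (huP n)).trans ?_
    refine mul_le_mul_of_nonneg_left (Real.rpow_le_rpow ?_ ?_ (by positivity))
      (rh_sRad_nonneg a ha)
    · exact setIntegral_nonneg measurableSet_Ioi fun r hr =>
        mul_nonneg (Real.rpow_nonneg (hu0 n r) _) (Real.rpow_nonneg (le_of_lt hr) _)
    · exact setIntegral_mono_on (huP n) hP measurableSet_Ioi (hPle n)
  -- inner convergence
  have hfle : ∀ n t, 0 < t → u n t * t ^ (2 * a + 1) ≤ v t * t ^ (2 * a + 1) := fun n t ht =>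
    mul_le_mul_of_nonneg_right (huv n t ht) (Real.rpow_nonneg ht.le _)
  have hfnn : ∀ n t, 0 < t → 0 ≤ u n t * t ^ (2 * a + 1) := fun n t ht =>
    mul_nonneg (hu0 n t) (Real.rpow_nonneg ht.le _)
  have hFlim : ∀ s, Filter.Tendsto (fun n => ∫ t in Set.Ioo (0:ℝ) s, u n t * t ^ (2 * a + 1))
      Filter.atTop (nhds (∫ t in Set.Ioo (0:ℝ) s, v t * t ^ (2 * a + 1))) := by
    intro s
    refine tendsto_integral_of_dominated_convergence (fun t => v t * t ^ (2 * a + 1))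
      (fun n => ((hub' n).1 s).aestronglyMeasurable) (vi s) ?_ ?_
    · intro n
      refine (ae_restrict_iff' measurableSet_Ioo).2 (Filter.Eventually.of_forall fun t ht => ?_)
      rw [Real.norm_of_nonneg (hfnn n t ht.1)]
      exact hfle n t ht.1
    · refine (ae_restrict_iff' measurableSet_Ioo).2 (Filter.Eventually.of_forall fun t ht => ?_)
      exact (hulim t ht.1).mul_const _
  have hFle : ∀ n s, ∫ t in Set.Ioo (0:ℝ) s, u n t * t ^ (2 * a + 1) ≤
      ∫ t in Set.Ioo (0:ℝ) s, v t * t ^ (2 * a + 1) := fun n s =>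
    setIntegral_mono_on ((hub' n).1 s) (vi s) measurableSet_Ioo fun t ht => hfle n t ht.1
  have hFnn : ∀ n s, 0 ≤ ∫ t in Set.Ioo (0:ℝ) s, u n t * t ^ (2 * a + 1) := fun n s =>
    setIntegral_nonneg measurableSet_Ioo fun t ht => hfnn n t ht.1
  have hgle : ∀ n s, 0 < s →
      s ^ (-(2 * a + 1)) * ∫ t in Set.Ioo (0:ℝ) s, u n t * t ^ (2 * a + 1) ≤
      s ^ (-(2 * a + 1)) * ∫ t in Set.Ioo (0:ℝ) s, v t * t ^ (2 * a + 1) := fun n s hs =>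
    mul_le_mul_of_nonneg_left (hFle n s) (Real.rpow_nonneg hs.le _)
  have hgnn : ∀ n s, 0 < s →
      0 ≤ s ^ (-(2 * a + 1)) * ∫ t in Set.Ioo (0:ℝ) s, u n t * t ^ (2 * a + 1) := fun n s hs =>
    mul_nonneg (Real.rpow_nonneg hs.le _) (hFnn n s)
  have hwlim : ∀ r, 0 < r → Filter.Tendsto (fun n => radInvLap (2 * a + 2) (u n) r)
      Filter.atTop (nhds (radInvLap (2 * a + 2) v r)) := by
    intro r hr
    simp only [rh_rad]
    refine tendsto_integral_of_dominated_convergence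
      (fun s => s ^ (-(2 * a + 1)) * ∫ t in Set.Ioo (0:ℝ) s, v t * t ^ (2 * a + 1))
      (fun n => ((hub' n).2.2 r hr).aestronglyMeasurable) (vint r hr) ?_ ?_
    · intro n
      refine (ae_restrict_iff' measurableSet_Ioi).2 (Filter.Eventually.of_forall fun s hs => ?_)
      have hs : 0 < s := hr.trans hs
      rw [Real.norm_of_nonneg (hgnn n s hs)]
      exact hgle n s hs
    · exact Filter.Eventually.of_forall fun s => (hFlim s).const_mul _
  have hwnn : ∀ n r, 0 < r → 0 ≤ radInvLap (2 * a + 2) (u n) r := by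
    intro n r hr
    rw [rh_rad]
    exact setIntegral_nonneg measurableSet_Ioi fun s hs => hgnn n s (hr.trans hs)
  have hwle : ∀ n r, 0 < r → radInvLap (2 * a + 2) (u n) r ≤ radInvLap (2 * a + 2) v r := by
    intro n r hr
    rw [rh_rad, rh_rad]
    exact setIntegral_mono_on ((hub' n).2.2 r hr) (vint r hr) measurableSet_Ioi
      fun s hs => hgle n s (hr.trans hs)
  have hwm : ∀ n, AEMeasurable (radInvLap (2 * a + 2) (u n)) (volume.restrict (Set.Ioi 0)) := by
    intro n
    refine aemeasurable_restrict_of_antitoneOn measurableSet_Ioi ?_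
    intro r hr r' hr' hrr
    have hr : 0 < r := hr
    rw [rh_rad, rh_rad]
    exact setIntegral_mono_set ((hub' n).2.2 r hr)
      ((ae_restrict_iff' measurableSet_Ioi).2
        (Filter.Eventually.of_forall fun s hs => hgnn n s (hr.trans hs)))
      (Filter.Eventually.of_forall (Set.Ioi_subset_Ioi hrr))
  have hlim : Filter.Tendsto (fun n => ∫ r in Set.Ioi (0:ℝ),
      u n r * radInvLap (2 * a + 2) (u n) r * r ^ (2 * a + 1)) Filter.atTop
      (nhds (∫ r in Set.Ioi (0:ℝ), v r * radInvLap (2 * a + 2) v r * r ^ (2 * a + 1))) := by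
    refine tendsto_integral_of_dominated_convergence
      (fun r => v r * radInvLap (2 * a + 2) v r * r ^ (2 * a + 1)) ?_ hint ?_ ?_
    · intro n
      exact (((hum n).restrict.aemeasurable.mul (hwm n)).mul
        (measurable_id.pow_const _).aemeasurable).aestronglyMeasurable
    · intro n
      refine (ae_restrict_iff' measurableSet_Ioi).2 (Filter.Eventually.of_forall fun r hr => ?_)
      have hr : 0 < r := hr
      have hrp := Real.rpow_nonneg hr.le (2 * a + 1)
      rw [Real.norm_of_nonneg (mul_nonneg (mul_nonneg (hu0 n r) (hwnn n r hr)) hrp)]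
      exact mul_le_mul_of_nonneg_right (mul_le_mul (huv n r hr) (hwle n r hr) (hwnn n r hr)
        (hv0 r hr)) hrp
    · refine (ae_restrict_iff' measurableSet_Ioi).2 (Filter.Eventually.of_forall fun r hr => ?_)
      exact ((hulim r hr).mul (hwlim r hr)).mul_const _
  exact le_of_tendsto' hlim hn

/-- the radial Hardy-Littlewood-Sobolev inequality with real dimension
parameter `d > 2`. -/
theorem radial_hls (d : ℝ) (hd : 2 < d) (v : ℝ → ℝ)
    (hv0 : ∀ r, 0 < r → 0 ≤ v r)
    (h : IntegrableOn (fun r => v r ^ (2 * d / (d + 2)) * r ^ (d - 1)) (Set.Ioi 0)) :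
    (∫ r in Set.Ioi (0 : ℝ), v r * radInvLap d v r * r ^ (d - 1)) ≤
      sRad d * (∫ r in Set.Ioi (0 : ℝ), v r ^ (2 * d / (d + 2)) * r ^ (d - 1)) ^ (1 + 2 / d) := by
  obtain ⟨a, rfl⟩ : ∃ a, d = 2 * a + 2 := ⟨(d - 2) / 2, by ring⟩
  have ha : 0 < a := by linarith
  have e1 : 2 * a + 2 - 1 = 2 * a + 1 := by ring
  have e2 : 2 * (2 * a + 2) / (2 * a + 2 + 2) = (2 * a + 2) / (a + 2) := by
    rw [div_eq_div_iff (by positivity) (by positivity)]; ring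
  have e3 : 1 + 2 / (2 * a + 2) = (a + 2) / (a + 1) := by field_simp; ring
  rw [e1, e2] at h
  rw [e1, e2, e3]
  exact rh_main a ha v hv0 h
end
end
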